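/- arXiv:1702.07701 — 4 statements merged into one kernel-verified Lean document; each statement's English description precedes it below -/
import Mathlib

section
/- Let k be a division ring and V ⊆ k^n a subset which is simultaneously a left k-subspace and a right k-subspace. Then the left dimension of V equals the right dimension of V. -/
theorem finrank_of_coords {K M : Type*} [DivisionRing K] [AddCommGroup M] [Module K M]
    (hM : Module.finrank K M = 1) {n : ℕ} (V : Submodule K (Fin n → M)) (I : Finset (Fin n))
    (hinj : ∀ v ∈ V, (∀ i ∈ I, v i = 0) → v = 0)
    (hsurj : ∀ i ∈ I, ∀ c : M, ∃ v ∈ V, v i = c ∧ ∀ j ∈ I, j ≠ i → v j = 0) :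
    Module.finrank K V = I.card := by
  haveI : Module.Finite K M := Module.finite_of_finrank_eq_succ hM
  let f : V →ₗ[K] (I → M) := (LinearMap.funLeft K M (fun i : I => (i : Fin n))).comp V.subtype
  have hf : ∀ (v : V) (i : I), f v i = v.1 i := fun v i => rfl
  have h1 : Function.Injective f := by
    rw [injective_iff_map_eq_zero]
    intro v hv
    apply Subtype.ext
    exact hinj v.1 v.2 (fun i hi => congrFun hv ⟨i, hi⟩)
  have h2 : Function.Surjective f := by
    intro w
    choose v hvV hv hv0 using fun i : I => hsurj i.1 i.2 (w i)
    refine ⟨∑ i, ⟨v i, hvV i⟩, ?_⟩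
    ext j
    rw [map_sum, Finset.sum_apply, Finset.sum_eq_single j]
    · exact hv j
    · intro i _ hij
      exact hv0 i j j.2 (fun h => hij (Subtype.ext h.symm))
    · simp
  rw [(LinearEquiv.ofBijective f ⟨h1, h2⟩).finrank_eq, Module.finrank_pi_fintype]
  simp [hM]

/-- For a two-sided subspace of `k^n` the left and right dimensions coincide. -/
theorem stmt_3 {k : Type*} [DivisionRing k] {n : ℕ}
    (V : Submodule k (Fin n → k)) (W : Submodule kᵐᵒᵖ (Fin n → k))
    (h : (V : Set (Fin n → k)) = (W : Set (Fin n → k))) :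
    Module.finrank k V = Module.finrank kᵐᵒᵖ W := by
  have hVW : ∀ v, v ∈ V ↔ v ∈ W := fun v => Set.ext_iff.1 h v
  have hop : Module.finrank kᵐᵒᵖ k = 1 := by
    let e : k ≃ₗ[kᵐᵒᵖ] kᵐᵒᵖ :=
      { MulOpposite.opAddEquiv with
        map_smul' := fun a x => rfl }
    rw [e.finrank_eq, Module.finrank_self]
  let P : Finset (Fin n) → Prop := fun I => ∀ v ∈ V, (∀ i ∈ I, v i = 0) → v = 0
  have hP : P Finset.univ := fun v _ hv => funext fun i => hv i (Finset.mem_univ i)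
  obtain ⟨I, -, hI⟩ := exists_minimal_le_of_wellFoundedLT P _ hP
  have key : ∀ i ∈ I, ∃ v ∈ V, v i ≠ 0 ∧ ∀ j ∈ I, j ≠ i → v j = 0 := by
    intro i hi
    have hn : ¬ P (I.erase i) := fun hp =>
      Finset.notMem_erase i I (hI.2 hp (Finset.erase_subset i I) hi)
    simp only [P] at hn
    push Not at hn
    obtain ⟨v, hv, hz, hne⟩ := hn
    refine ⟨v, hv, fun h0 => hne (hI.1 v hv ?_), fun j hj hji =>
      hz j (Finset.mem_erase.2 ⟨hji, hj⟩)⟩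
    intro j hj
    by_cases hji : j = i
    · rw [hji, h0]
    · exact hz j (Finset.mem_erase.2 ⟨hji, hj⟩)
  rw [finrank_of_coords (Module.finrank_self k) V I hI.1, finrank_of_coords hop W I]
  · exact fun v hv => hI.1 v ((hVW v).2 hv)
  · intro i hi c
    obtain ⟨v, hv, hne, hz⟩ := key i hi
    refine ⟨MulOpposite.op ((v i)⁻¹ * c) • v, W.smul_mem _ ((hVW v).1 hv), ?_, ?_⟩
    · simp [hne]
    · intro j hj hji
      simp [hz j hj hji]
  · intro i hi c
    obtain ⟨v, hv, hne, hz⟩ := key i hi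
    refine ⟨(c * (v i)⁻¹) • v, V.smul_mem _ hv, ?_, ?_⟩
    · simp [hne]
    · intro j hj hji
      simp [hz j hj hji]
end

section
/- Let k be a division ring, f : k^n → k^n injective taking every left or right affine subspace to a left or right affine subspace. Then f maps every two-sided affine subspace onto a two-sided affine subspace, and maps every purely left or purely right affine subspace onto a purely left or purely right affine subspace. -/
open Function Set

variable {k : Type*}

/-- A set is a left `k`-subspace of `k^n`. -/
def IsLeftSub [DivisionRing k] {n : ℕ} (A : Set (Fin n → k)) : Prop :=
  ∃ S : Submodule k (Fin n → k), A = (S : Set (Fin n → k))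

/-- A set is a right `k`-subspace of `k^n` (right modules encoded via `kᵐᵒᵖ`). -/
def IsRightSub [DivisionRing k] {n : ℕ} (A : Set (Fin n → k)) : Prop :=
  ∃ S : Submodule kᵐᵒᵖ (Fin n → k), A = (S : Set (Fin n → k))

/-- A set is a left affine subspace of `k^n`: a translate of a left subspace. -/
def IsLeftAff [DivisionRing k] {n : ℕ} (A : Set (Fin n → k)) : Prop :=
  ∃ (v : Fin n → k) (S : Submodule k (Fin n → k)), A = (v + ·) '' (S : Set (Fin n → k))

/-- A set is a right affine subspace of `k^n`: a translate of a right subspace. -/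
def IsRightAff [DivisionRing k] {n : ℕ} (A : Set (Fin n → k)) : Prop :=
  ∃ (v : Fin n → k) (S : Submodule kᵐᵒᵖ (Fin n → k)), A = (v + ·) '' (S : Set (Fin n → k))

/-- `A` is a left affine subspace of dimension `d`. -/
def HasDimL [DivisionRing k] {n : ℕ} (A : Set (Fin n → k)) (d : ℕ) : Prop :=
  ∃ (v : Fin n → k) (S : Submodule k (Fin n → k)),
    A = (v + ·) '' (S : Set (Fin n → k)) ∧ Module.finrank k S = d

/-- `A` is a right affine subspace of dimension `d`. -/
def HasDimR [DivisionRing k] {n : ℕ} (A : Set (Fin n → k)) (d : ℕ) : Prop :=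
  ∃ (v : Fin n → k) (S : Submodule kᵐᵒᵖ (Fin n → k)),
    A = (v + ·) '' (S : Set (Fin n → k)) ∧ Module.finrank kᵐᵒᵖ S = d


namespace St6

section basics
variable [DivisionRing k] {n : ℕ}

/-- scalar action from the left (`true`) or from the right (`false`). -/
def act (s : Bool) (c : k) (v : Fin n → k) : Fin n → k :=
  fun i => if s then c * v i else v i * c

theorem act_zero (s : Bool) (v : Fin n → k) : act s 0 v = 0 := by
  funext i; cases s <;> simp [act]
theorem act_one (s : Bool) (v : Fin n → k) : act s 1 v = v := by
  funext i; cases s <;> simp [act]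
theorem act_vzero (s : Bool) (c : k) : act s c (0 : Fin n → k) = 0 := by
  funext i; cases s <;> simp [act]
theorem act_add (s : Bool) (c : k) (v w : Fin n → k) : act s c (v + w) = act s c v + act s c w := by
  funext i; cases s <;> simp [act, mul_add, add_mul]
theorem act_sub (s : Bool) (c : k) (v w : Fin n → k) : act s c (v - w) = act s c v - act s c w := by
  funext i; cases s <;> simp [act, mul_sub, sub_mul]
theorem add_act (s : Bool) (c d : k) (v : Fin n → k) : act s (c + d) v = act s c v + act s d v := by
  funext i; cases s <;> simp [act, mul_add, add_mul]
theorem sub_act (s : Bool) (c d : k) (v : Fin n → k) : act s (c - d) v = act s c v - act s d v := by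
  funext i; cases s <;> simp [act, mul_sub, sub_mul]
theorem act_act (s : Bool) (c d : k) : ∃ e : k, ∀ v : Fin n → k, act s c (act s d v) = act s e v := by
  cases s
  · exact ⟨d * c, fun v => by funext i; simp [act, mul_assoc]⟩
  · exact ⟨c * d, fun v => by funext i; simp [act, mul_assoc]⟩
theorem act_inv (s : Bool) (c : k) (hc : c ≠ 0) (v : Fin n → k) : act s c (act s c⁻¹ v) = v := by
  funext i; cases s <;> simp [act, mul_assoc, hc]
theorem act_solve (s : Bool) (v : Fin n → k) (i : Fin n) (h : v i ≠ 0) (b : k) :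
    ∃ c, act s c v i = b := by
  cases s
  · exact ⟨(v i)⁻¹ * b, by simp [act, h]⟩
  · exact ⟨b * (v i)⁻¹, by simp [act, h]⟩
theorem act_coord_zero (s : Bool) (c : k) (v : Fin n → k) (i : Fin n) (h : v i = 0) :
    act s c v i = 0 := by
  cases s <;> simp [act, h]
theorem act_coord_ne (s : Bool) (c : k) (v : Fin n → k) (i : Fin n) (h : v i ≠ 0) (hc : c ≠ 0) :
    act s c v i ≠ 0 := by
  cases s <;> simp [act, h, hc]

/-- affine subspaces, by closure -/
def Aff (s : Bool) (A : Set (Fin n → k)) : Prop :=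
  A.Nonempty ∧ ∀ x ∈ A, ∀ y ∈ A, ∀ z ∈ A, ∀ c : k, x + act s c (y - z) ∈ A

theorem isLeftAff_iff (A : Set (Fin n → k)) : IsLeftAff A ↔ Aff true A := by
  constructor
  · rintro ⟨v, S, rfl⟩
    refine ⟨⟨v, 0, S.zero_mem, by simp⟩, ?_⟩
    rintro _ ⟨x, hx, rfl⟩ _ ⟨y, hy, rfl⟩ _ ⟨z, hz, rfl⟩ c
    refine ⟨x + c • (y - z), S.add_mem hx (S.smul_mem c (S.sub_mem hy hz)), ?_⟩
    funext i; simp [act, add_assoc]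
  · rintro ⟨⟨v, hv⟩, h⟩
    refine ⟨v, ⟨⟨⟨{x | v + x ∈ A}, ?_⟩, ?_⟩, ?_⟩, ?_⟩
    · intro a b ha hb
      have := h _ ha _ hb _ hv 1
      rw [act_one] at this
      simpa [add_assoc] using this
    · simpa using hv
    · intro c x hx
      have := h _ hv _ hx _ hv c
      have e : act true c (v + x - v) = c • x := by funext i; simp [act]
      rw [e] at this; exact this
    · ext x; constructor
      · intro hx; exact ⟨x - v, by simpa using hx, by simp⟩
      · rintro ⟨y, hy, rfl⟩; exact hy

theorem isRightAff_iff (A : Set (Fin n → k)) : IsRightAff A ↔ Aff false A := by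
  constructor
  · rintro ⟨v, S, rfl⟩
    refine ⟨⟨v, 0, S.zero_mem, by simp⟩, ?_⟩
    rintro _ ⟨x, hx, rfl⟩ _ ⟨y, hy, rfl⟩ _ ⟨z, hz, rfl⟩ c
    refine ⟨x + MulOpposite.op c • (y - z),
      S.add_mem hx (S.smul_mem _ (S.sub_mem hy hz)), ?_⟩
    funext i; simp [act, add_assoc]
  · rintro ⟨⟨v, hv⟩, h⟩
    refine ⟨v, ⟨⟨⟨{x | v + x ∈ A}, ?_⟩, ?_⟩, ?_⟩, ?_⟩
    · intro a b ha hb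
      have := h _ ha _ hb _ hv 1
      rw [act_one] at this
      simpa [add_assoc] using this
    · simpa using hv
    · intro c x hx
      have := h _ hv _ hx _ hv c.unop
      have e : act false c.unop (v + x - v) = c • x := by
        funext i; simp [act, MulOpposite.smul_eq_mul_unop]
      rw [e] at this; exact this
    · ext x; constructor
      · intro hx; exact ⟨x - v, by simpa using hx, by simp⟩
      · rintro ⟨y, hy, rfl⟩; exact hy

theorem Aff.add {s : Bool} {A : Set (Fin n → k)} (h : Aff s A) {x y z : Fin n → k}
    (hx : x ∈ A) (hy : y ∈ A) (hz : z ∈ A) : x + (y - z) ∈ A := by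
  have := h.2 x hx y hy z hz 1
  rwa [act_one] at this

open Classical in
/-- pivots -/
noncomputable def piv (A : Set (Fin n → k)) : Finset (Fin n) :=
  Finset.univ.filter fun i => ∃ x ∈ A, ∃ y ∈ A, (∀ j < i, x j = y j) ∧ x i ≠ y i

theorem mem_piv {A : Set (Fin n → k)} {i : Fin n} :
    i ∈ piv A ↔ ∃ x ∈ A, ∃ y ∈ A, (∀ j < i, x j = y j) ∧ x i ≠ y i := by
  simp [piv]

/-- dimension -/
noncomputable def dm (A : Set (Fin n → k)) : ℕ := (piv A).card

theorem piv_mono {A B : Set (Fin n → k)} (h : A ⊆ B) : piv A ⊆ piv B := by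
  intro i hi
  obtain ⟨x, hx, y, hy, h'⟩ := mem_piv.1 hi
  exact mem_piv.2 ⟨x, h hx, y, h hy, h'⟩

theorem dm_mono {A B : Set (Fin n → k)} (h : A ⊆ B) : dm A ≤ dm B :=
  Finset.card_le_card (piv_mono h)

theorem dm_le (A : Set (Fin n → k)) : dm A ≤ n := by
  have := Finset.card_le_univ (piv A)
  simpa [dm] using this

theorem sub_of_piv {s : Bool} {A B : Set (Fin n → k)} (hA : Aff s A) (hAB : A ⊆ B)
    (hp : piv B ⊆ piv A) : B ⊆ A := by
  have key : ∀ m : ℕ, ∀ j : ℕ, j + m = n → ∀ a ∈ A, ∀ b ∈ B, (∀ i : Fin n, i.1 < j → b i = a i) →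
      b ∈ A := by
    intro m
    induction m with
    | zero =>
      intro j hj a ha b hb h
      have : b = a := by funext i; exact h i (by omega)
      exact this ▸ ha
    | succ m ih =>
      intro j hj a ha b hb h
      let i : Fin n := ⟨j, by omega⟩
      by_cases hi : b i = a i
      · refine ih (j+1) (by omega) a ha b hb ?_
        intro l hl
        rcases Nat.lt_succ_iff_lt_or_eq.1 hl with h1 | h1
        · exact h l h1
        · have : l = i := Fin.ext h1
          rw [this]; exact hi
      · have : i ∈ piv B := mem_piv.2 ⟨b, hb, a, hAB ha, fun l hl => h l hl, hi⟩
        obtain ⟨x, hx, y, hy, h1, h2⟩ := mem_piv.1 (hp this)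
        obtain ⟨c, hc⟩ := act_solve s (x - y) i (by simpa [sub_eq_zero] using h2) (b i - a i)
        refine ih (j+1) (by omega) _ (hA.2 a ha x hx y hy c) b hb ?_
        intro l hl
        rcases Nat.lt_succ_iff_lt_or_eq.1 hl with h3 | h3
        · have := act_coord_zero s c (x - y) l (by simp [h1 l h3])
          simp [this, h l h3]
        · have : l = i := Fin.ext h3
          rw [this]; simp [hc]
  intro b hb
  obtain ⟨a, ha⟩ := hA.1
  exact key n 0 (by omega) a ha b hb (fun i hi => absurd hi (by omega))

theorem eq_of_dm {s : Bool} {A B : Set (Fin n → k)} (hA : Aff s A) (hAB : A ⊆ B)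
    (hp : dm B ≤ dm A) : A = B :=
  Set.Subset.antisymm hAB (sub_of_piv hA hAB
    (Finset.eq_of_subset_of_card_le (piv_mono hAB) hp).symm.subset)

theorem dm_lt {s : Bool} {A B : Set (Fin n → k)} (hA : Aff s A) (hAB : A ⊆ B)
    {b : Fin n → k} (hb : b ∈ B) (hb' : b ∉ A) : dm A < dm B := by
  by_contra h
  exact hb' ((eq_of_dm hA hAB (not_lt.1 h)) ▸ hb)

/-- join -/
def join (s : Bool) (A : Set (Fin n → k)) (a0 u : Fin n → k) : Set (Fin n → k) :=
  {x | ∃ a ∈ A, ∃ c : k, x = a + act s c (u - a0)}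

theorem sub_join (s : Bool) (A : Set (Fin n → k)) (a0 u : Fin n → k) : A ⊆ join s A a0 u :=
  fun a ha => ⟨a, ha, 0, by simp [act_zero]⟩

theorem mem_join (s : Bool) (A : Set (Fin n → k)) (a0 u : Fin n → k) (h : a0 ∈ A) :
    u ∈ join s A a0 u :=
  ⟨a0, h, 1, by simp [act_one]⟩

theorem aff_join {s : Bool} {A : Set (Fin n → k)} (hA : Aff s A) (a0 u : Fin n → k) :
    Aff s (join s A a0 u) := by
  refine ⟨hA.1.mono (sub_join _ _ _ _), ?_⟩
  rintro _ ⟨a, ha, c, rfl⟩ _ ⟨b, hb, d, rfl⟩ _ ⟨e, he, f, rfl⟩ g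
  obtain ⟨h, hh⟩ := act_act (n := n) s g (d - f)
  refine ⟨_, hA.2 a ha b hb e he g, c + h, ?_⟩
  have : b + act s d (u - a0) - (e + act s f (u - a0)) = (b - e) + act s (d - f) (u - a0) := by
    rw [sub_act]; abel
  rw [this, act_add, hh, add_act]; abel

theorem join_sub {s s' : Bool} {A B : Set (Fin n → k)} (hB : Aff s B) (hAB : A ⊆ B)
    {a0 u : Fin n → k} (ha : a0 ∈ B) (hu : u ∈ B) (_h : s = s') : join s' A a0 u ⊆ B := by
  subst _h
  rintro _ ⟨a, ha', c, rfl⟩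
  exact hB.2 _ (hAB ha') _ hu _ ha _

theorem dm_join {s : Bool} {A : Set (Fin n → k)} (hA : Aff s A) {a0 : Fin n → k} (ha0 : a0 ∈ A)
    (u : Fin n → k) : dm (join s A a0 u) ≤ dm A + 1 := by
  classical
  by_cases hu : u ∈ A
  · have : join s A a0 u ⊆ A := join_sub hA subset_rfl ha0 hu rfl
    exact (dm_mono this).trans (Nat.le_succ _)
  -- best approximation
  have h1 : ∃ i : Fin n, (∃ a ∈ A, (∀ j < i, u j = a j) ∧ u i ≠ a i) ∧ i ∉ piv A := by
    by_contra hcon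
    push Not at hcon
    have key : ∀ m : ℕ, m ≤ n → ∃ a ∈ A, ∀ j : Fin n, j.1 < m → u j = a j := by
      intro m
      induction m with
      | zero => intro _; exact ⟨a0, ha0, fun j hj => absurd hj (by omega)⟩
      | succ m ih =>
        intro hm
        obtain ⟨a, ha, h⟩ := ih (by omega)
        let i : Fin n := ⟨m, by omega⟩
        by_cases hui : u i = a i
        · refine ⟨a, ha, ?_⟩
          intro l hl
          rcases Nat.lt_succ_iff_lt_or_eq.1 hl with h3 | h3
          · exact h l h3
          · have : l = i := Fin.ext h3
            rw [this]; exact hui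
        obtain ⟨x, hx, y, hy, h1, h2⟩ := mem_piv.1 (hcon i ⟨a, ha, fun j hj => h j hj, hui⟩)
        obtain ⟨c, hc⟩ := act_solve s (x - y) i (by simpa [sub_eq_zero] using h2) (u i - a i)
        refine ⟨_, hA.2 a ha x hx y hy c, ?_⟩
        intro l hl
        rcases Nat.lt_succ_iff_lt_or_eq.1 hl with h3 | h3
        · have := act_coord_zero s c (x - y) l (by simp [h1 l h3])
          simp [this, h l h3]
        · have : l = i := Fin.ext h3
          rw [this]; simp [hc]
    obtain ⟨a, ha, h⟩ := key n le_rfl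
    exact hu ((funext fun j => h j j.2 : u = a) ▸ ha)
  obtain ⟨i, ⟨a, ha, hlt, hne⟩, hi⟩ := h1
  have hsub : piv (join s A a0 u) ⊆ insert i (piv A) := by
    intro j hj
    obtain ⟨x, ⟨b, hb, c, rfl⟩, y, ⟨e, he, d, rfl⟩, h2, h3⟩ := mem_piv.1 hj
    by_contra hcon
    rw [Finset.mem_insert, not_or] at hcon
    obtain ⟨hji, hjA⟩ := hcon
    -- difference
    let b' := b + act s (c - d) (a - a0)
    have hb' : b' ∈ A := hA.2 b hb a ha a0 ha0 _
    let w := act s (c - d) (u - a)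
    have hw : ∀ l, (b + act s c (u - a0)) l - (e + act s d (u - a0)) l = b' l - e l + w l := by
      intro l
      have : (b + act s c (u - a0)) - (e + act s d (u - a0)) = b' - e + w := by
        simp only [b', w, sub_act, act_sub]; abel
      simpa using congrFun this l
    have hw0 : ∀ l < i, w l = 0 := fun l hl => act_coord_zero _ _ _ _ (by simp [hlt l hl])
    have h2' : ∀ l < j, b' l - e l + w l = 0 := fun l hl => by rw [← hw, h2 l hl, sub_self]
    have h3' : b' j - e j + w j ≠ 0 := by rw [← hw]; exact sub_ne_zero.2 h3
    rcases lt_or_gt_of_ne hji with hlt' | hgt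
    · apply hjA
      refine mem_piv.2 ⟨b', hb', e, he, ?_, ?_⟩
      · intro l hl
        have := h2' l hl
        rw [hw0 l (hl.trans hlt'), add_zero] at this
        exact sub_eq_zero.1 this
      · rw [hw0 j hlt', add_zero] at h3'
        exact sub_ne_zero.1 h3'
    · have hbe : ∀ l < i, b' l = e l := by
        intro l hl
        have := h2' l (hl.trans hgt)
        rw [hw0 l hl, add_zero] at this
        exact sub_eq_zero.1 this
      have hbei : b' i = e i := by
        by_contra hne
        exact hi (mem_piv.2 ⟨b', hb', e, he, hbe, hne⟩)
      have hwi : w i = 0 := by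
        have := h2' i hgt
        rwa [hbei, sub_self, zero_add] at this
      by_cases hcd : c - d = 0
      · have hwz : w = 0 := by simp only [w, hcd, act_zero]
        apply hjA
        refine mem_piv.2 ⟨b', hb', e, he, ?_, ?_⟩
        · intro l hl
          have := h2' l hl
          rw [hwz, Pi.zero_apply, add_zero] at this
          exact sub_eq_zero.1 this
        · rw [hwz, Pi.zero_apply, add_zero] at h3'
          exact sub_ne_zero.1 h3'
      · exact act_coord_ne s (c - d) (u - a) i (by simpa [sub_eq_zero] using hne) hcd hwi
  exact (Finset.card_le_card hsub).trans (Finset.card_insert_le _ _)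

end basics
end St6

namespace St6

section lines
variable [DivisionRing k] {n : ℕ}

theorem aff_singleton (s : Bool) (p : Fin n → k) : Aff s {p} := by
  refine ⟨⟨p, rfl⟩, ?_⟩
  rintro x rfl y rfl z rfl c
  simp [act_vzero]

theorem dm_singleton (p : Fin n → k) : dm ({p} : Set (Fin n → k)) = 0 := by
  rw [dm, Finset.card_eq_zero, Finset.eq_empty_iff_forall_notMem]
  intro i hi
  obtain ⟨x, rfl, y, rfl, -, h⟩ := mem_piv.1 hi
  exact h rfl

/-- line through two points -/
def line (s : Bool) (p q : Fin n → k) : Set (Fin n → k) := join s {p} p q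
/-- plane through three points -/
def plane (s : Bool) (p q r : Fin n → k) : Set (Fin n → k) := join s (line s p q) p r

theorem mem_line {s : Bool} {p q x : Fin n → k} :
    x ∈ line s p q ↔ ∃ c, x = p + act s c (q - p) := by
  simp [line, join]

theorem aff_line (s : Bool) (p q : Fin n → k) : Aff s (line s p q) := aff_join (aff_singleton _ _) _ _
theorem line_left (s : Bool) (p q : Fin n → k) : p ∈ line s p q := sub_join _ _ _ _ rfl
theorem line_right (s : Bool) (p q : Fin n → k) : q ∈ line s p q := mem_join _ _ _ _ rfl
theorem dm_line (s : Bool) (p q : Fin n → k) : dm (line s p q) ≤ 1 := by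
  have := dm_join (aff_singleton s p) (rfl : p ∈ ({p} : Set _)) q
  rwa [dm_singleton] at this
theorem line_sub {s : Bool} {B : Set (Fin n → k)} (hB : Aff s B) {p q : Fin n → k}
    (hp : p ∈ B) (hq : q ∈ B) : line s p q ⊆ B :=
  join_sub hB (by simpa using hp) hp hq rfl
theorem one_le_dm {A : Set (Fin n → k)} {x y : Fin n → k} (hx : x ∈ A) (hy : y ∈ A)
    (h : x ≠ y) : 1 ≤ dm A := by
  have : dm {y} < dm A := dm_lt (aff_singleton true y) (by simpa using hy) hx (by simpa using h)
  omega
theorem line_eq {s : Bool} {p q x y : Fin n → k} (hx : x ∈ line s p q) (hy : y ∈ line s p q)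
    (h : x ≠ y) : line s x y = line s p q :=
  eq_of_dm (aff_line _ _ _) (line_sub (aff_line _ _ _) hx hy)
    ((dm_line _ _ _).trans (one_le_dm (line_left _ _ _) (line_right _ _ _) h))
theorem line_eq' {s : Bool} {A : Set (Fin n → k)} (hA : dm A ≤ 1) (hs : Aff s A)
    {x y : Fin n → k} (hx : x ∈ A) (hy : y ∈ A) (h : x ≠ y) : line s x y = A :=
  eq_of_dm (aff_line _ _ _) (line_sub hs hx hy)
    (hA.trans (one_le_dm (line_left _ _ _) (line_right _ _ _) h))

theorem aff_plane (s : Bool) (p q r : Fin n → k) : Aff s (plane s p q r) :=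
  aff_join (aff_line _ _ _) _ _
theorem plane1 (s : Bool) (p q r : Fin n → k) : p ∈ plane s p q r :=
  sub_join _ _ _ _ (line_left _ _ _)
theorem plane2 (s : Bool) (p q r : Fin n → k) : q ∈ plane s p q r :=
  sub_join _ _ _ _ (line_right _ _ _)
theorem plane3 (s : Bool) (p q r : Fin n → k) : r ∈ plane s p q r :=
  mem_join _ _ _ _ (line_left _ _ _)
theorem dm_plane (s : Bool) (p q r : Fin n → k) : dm (plane s p q r) ≤ 2 := by
  have := dm_join (aff_line s p q) (line_left s p q) r
  have h := dm_line s p q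
  have : dm (plane s p q r) ≤ dm (line s p q) + 1 := this
  omega
theorem plane_sub {s : Bool} {B : Set (Fin n → k)} (hB : Aff s B) {p q r : Fin n → k}
    (hp : p ∈ B) (hq : q ∈ B) (hr : r ∈ B) : plane s p q r ⊆ B :=
  join_sub hB (line_sub hB hp hq) hp hr rfl
theorem two_le_dm_plane {s : Bool} {p q r : Fin n → k} (h : p ≠ q) (hr : r ∉ line s p q) :
    2 ≤ dm (plane s p q r) := by
  have h1 := one_le_dm (line_left s p q) (line_right s p q) h
  have h2 : dm (line s p q) < dm (plane s p q r) :=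
    dm_lt (aff_line s p q) (sub_join _ _ _ _) (plane3 _ _ _ _) hr
  omega

theorem plane_sub' {s t : Bool} {B : Set (Fin n → k)} (hB : Aff t B) {p q r : Fin n → k}
    (hp : p ∈ B) (hq : line s p q ⊆ B) (hr : line s p r ⊆ B) : plane s p q r ⊆ B := by
  rintro _ ⟨a, ha, c, rfl⟩
  have h1 : p + act s c (r - p) ∈ B := hr (mem_line.2 ⟨c, rfl⟩)
  have := hB.add (hq ha) h1 hp
  simpa using this

/-- central multiples -/
def TS (u : Fin n → k) : Prop :=
  ∃ (l : k) (w : Fin n → k), l ≠ 0 ∧ (∀ i c, c * w i = w i * c) ∧ u = fun i => l * w i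

theorem TS_line {p q : Fin n → k} (h : TS (q - p)) (s t : Bool) : line s p q = line t p q := by
  obtain ⟨l, w, hl, hw, h⟩ := h
  have h1 : line true p q = line false p q := by
    ext x
    rw [mem_line, mem_line, h]
    constructor
    · rintro ⟨c, rfl⟩
      refine ⟨l⁻¹ * c * l, ?_⟩
      congr 1
      funext i
      simp only [act, if_true, Bool.false_eq_true, if_false]
      rw [mul_assoc l, ← hw]
      simp [← mul_assoc, hl]
    · rintro ⟨c, rfl⟩
      refine ⟨l * c * l⁻¹, ?_⟩
      congr 1
      funext i
      simp only [act, if_true, Bool.false_eq_true, if_false]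
      rw [mul_assoc l, ← hw]
      simp [mul_assoc, hl]
  cases s <;> cases t <;> simp [h1]

theorem line_TS {p q : Fin n → k} (h : line true p q = line false p q) : TS (q - p) := by
  by_cases h0 : q - p = 0
  · exact ⟨1, 0, one_ne_zero, by simp, by rw [h0]; funext i; simp⟩
  obtain ⟨j, hj⟩ : ∃ j, (q - p) j ≠ 0 := by
    by_contra hc; push Not at hc; exact h0 (funext hc)
  generalize hu : q - p = u at *
  refine ⟨u j, fun i => (u j)⁻¹ * u i, hj, ?_, by funext i; simp [hj]⟩
  intro i c
  have hm : p + act false c u ∈ line true p q := by rw [h]; exact mem_line.2 ⟨c, by rw [hu]⟩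
  obtain ⟨d, hd⟩ := mem_line.1 hm
  rw [hu] at hd
  have hd := add_left_cancel hd
  have hi := congrFun hd i
  have hjj := congrFun hd j
  simp only [act, if_true, Bool.false_eq_true, if_false] at hi hjj
  have hc : d = u j * c * (u j)⁻¹ := by rw [hjj]; simp [mul_assoc, hj]
  rw [mul_assoc, hi, hc]
  simp [← mul_assoc, hj]

theorem TS_neg {u : Fin n → k} (h : TS u) : TS (-u) := by
  obtain ⟨l, w, hl, hw, rfl⟩ := h
  exact ⟨-l, w, neg_ne_zero.2 hl, hw, by funext i; simp⟩

theorem TS_unscale {l : k} (hl : l ≠ 0) {u : Fin n → k} (h : TS (fun i => l * u i)) : TS u := by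
  obtain ⟨m, w, hm, hw, h⟩ := h
  refine ⟨l⁻¹ * m, w, mul_ne_zero (inv_ne_zero hl) hm, hw, ?_⟩
  funext i
  have := congrFun h i
  rw [mul_assoc, ← this]; simp [hl]

theorem central_inv {a : k} (h : ∀ c, c * a = a * c) : ∀ c, c * a⁻¹ = a⁻¹ * c := by
  intro c
  have : Commute c a := h c
  exact this.inv_right₀

theorem central_mul {a b : k} (h : ∀ c, c * a = a * c) (h' : ∀ c, c * b = b * c) :
    ∀ c, c * (a * b) = (a * b) * c := fun c =>
  (Commute.mul_right (h c : Commute c a) (h' c : Commute c b))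
theorem central_sub {a b : k} (h : ∀ c, c * a = a * c) (h' : ∀ c, c * b = b * c) :
    ∀ c, c * (a - b) = (a - b) * c := fun c =>
  (Commute.sub_right (h c : Commute c a) (h' c : Commute c b))

/-- The triangle lemma: `a = l w`, `b`, `b - a` all central multiples, `b` not on the line of `a`. -/
theorem triangle {l : k} (hl : l ≠ 0) {w b : Fin n → k} (hw : ∀ i c, c * w i = w i * c)
    (hw0 : w ≠ 0)
    (hb : TS b) (hba : TS (b - fun i => l * w i)) (hind : ∀ c : k, b ≠ fun i => c * w i) :
    ∃ z : Fin n → k, (∀ i c, c * z i = z i * c) ∧ b = fun i => l * z i := by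
  obtain ⟨m, z, hm, hz, rfl⟩ := hb
  obtain ⟨v, s, hv, hs, h⟩ := hba
  -- rho z - w = sigma s
  set rho := l⁻¹ * m with hrho
  set sig := l⁻¹ * v with hsig
  have hE : ∀ i, rho * z i - w i = sig * s i := by
    intro i
    have := congrFun h i
    simp only [Pi.sub_apply] at this
    rw [hsig, mul_assoc l⁻¹ v, ← this, mul_sub, hrho]; simp [hl, mul_assoc]
  have hsig0 : sig ≠ 0 := mul_ne_zero (inv_ne_zero hl) hv
  suffices hc : ∀ c, c * rho = rho * c by
    refine ⟨fun i => rho * z i, fun i => central_mul hc (hz i), ?_⟩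
    funext i; simp [hrho, ← mul_assoc, hl]
  obtain ⟨i, hi⟩ : ∃ i, w i ≠ 0 := by
    by_contra hc; push Not at hc; exact hw0 (funext hc)
  have fin : ∀ a b : k, (∀ c, c * a = a * c) → (∀ c, c * b = b * c) → a ≠ 0 → rho * a = b →
      ∀ c, c * rho = rho * c := by
    intro a b ha hb ha0 hab
    have : rho = b * a⁻¹ := by rw [← hab]; simp [mul_assoc, ha0]
    rw [this]
    exact central_mul hb (central_inv ha)
  by_cases hsi : s i = 0
  · have h1 : rho * z i = w i := by
      have := hE i; rw [hsi, mul_zero] at this; exact sub_eq_zero.1 this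
    refine fin (z i) (w i) (hz i) (hw i) ?_ h1
    intro h0; rw [h0, mul_zero] at h1; exact hi h1.symm
  · have hsg : sig = (rho * z i - w i) * (s i)⁻¹ := by rw [hE]; simp [mul_assoc, hsi]
    have hq : ∀ j, ∀ c, c * ((s i)⁻¹ * s j) = ((s i)⁻¹ * s j) * c :=
      fun j => central_mul (central_inv (hs i)) (hs j)
    have h2 : ∀ j, rho * (z j - z i * ((s i)⁻¹ * s j)) = w j - w i * ((s i)⁻¹ * s j) := by
      intro j
      have := hE j
      rw [hsg, sub_mul, sub_mul] at this
      rw [mul_sub]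
      rw [sub_eq_iff_eq_add] at this ⊢
      rw [this]; simp only [mul_assoc]; abel
    by_cases hall : ∃ j, z j - z i * ((s i)⁻¹ * s j) ≠ 0
    · obtain ⟨j, hj⟩ := hall
      exact fin _ _ (central_sub (hz j) (central_mul (hz i) (hq j)))
        (central_sub (hw j) (central_mul (hw i) (hq j))) hj (h2 j)
    · push Not at hall
      exfalso
      refine hind (m * z i * (w i)⁻¹) ?_
      funext j
      have h3 := h2 j
      rw [hall j, mul_zero] at h3
      have h4 : w j = w i * ((s i)⁻¹ * s j) := (sub_eq_zero.1 h3.symm)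
      have h5 : z j = z i * ((s i)⁻¹ * s j) := sub_eq_zero.1 (hall j)
      rw [h4, h5]
      simp only [mul_assoc]
      rw [inv_mul_cancel_left₀ hi]

theorem generic (hn : 2 ≤ n) (hk : ∃ b c : k, b * c ≠ c * b) :
    ∃ u : Fin n → k, ∀ z : Fin n → k, (∀ i c, c * z i = z i * c) → ¬ TS (u - z) := by
  obtain ⟨b, c, hbc⟩ := hk
  let i0 : Fin n := ⟨0, by omega⟩
  let i1 : Fin n := ⟨1, by omega⟩
  have h01 : i1 ≠ i0 := by simp [i0, i1]
  refine ⟨fun i => if i = i0 then b else c, ?_⟩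
  rintro z hz ⟨l, w, hl, hw, h⟩
  have h0 := congrFun h i0
  have h1 := congrFun h i1
  simp only [Pi.sub_apply, if_true, if_neg h01] at h0 h1
  apply hbc
  have e0 : b = l * w i0 + z i0 := by rw [← h0]; abel
  have e1 : c = l * w i1 + z i1 := by rw [← h1]; abel
  have cw : ∀ i (x : k), Commute x (w i) := fun i x => hw i x
  have cz : ∀ i (x : k), Commute x (z i) := fun i x => hz i x
  have : Commute b c := by
    rw [e0, e1]
    refine Commute.add_left (Commute.add_right ?_ (cz _ _)) (cz _ _).symm
    exact Commute.mul_right (Commute.mul_left (Commute.refl l) (cw _ _).symm) (cw _ _)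
  exact this

end lines

section maps
variable [DivisionRing k] {n : ℕ} {f : (Fin n → k) → (Fin n → k)}

theorem dm_image (hinj : Function.Injective f)
    (hf : ∀ s A, Aff s A → ∃ s', Aff s' (f '' A)) :
    ∀ (m : ℕ) (s : Bool) (A : Set (Fin n → k)), Aff s A → n ≤ dm A + m → dm (f '' A) ≤ dm A := by
  intro m
  induction m with
  | zero => intro s A hA h; exact (dm_le _).trans h
  | succ m ih =>
    intro s A hA h
    by_cases hu : ∃ u, u ∉ A
    · obtain ⟨u, hu⟩ := hu
      obtain ⟨a, ha⟩ := hA.1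
      have h1 := dm_join hA ha u
      have h2 := dm_lt hA (sub_join s A a u) (mem_join _ _ _ _ ha) hu
      have h3 := ih s _ (aff_join hA a u) (by omega)
      obtain ⟨s', hs'⟩ := hf s A hA
      have h4 := dm_lt hs' (image_mono (sub_join s A a u))
        (mem_image_of_mem f (mem_join s A a u ha))
        (fun hc => hu ((hinj.mem_set_image).1 hc))
      omega
    · push Not at hu
      have : f '' A ⊆ A := fun x _ => hu x
      exact dm_mono this

theorem dm_univ : dm (univ : Set (Fin n → k)) = n := by
  have : piv (univ : Set (Fin n → k)) = Finset.univ := by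
    ext i
    simp only [Finset.mem_univ, iff_true]
    refine mem_piv.2 ⟨Pi.single i 1, trivial, 0, trivial, ?_, by simp⟩
    intro j hj
    simp [hj.ne]
  rw [dm, this]; simp

theorem aff_univ (s : Bool) : Aff s (univ : Set (Fin n → k)) := ⟨⟨0, trivial⟩, by simp⟩

theorem surj (hinj : Function.Injective f)
    (hf : ∀ s A, Aff s A → ∃ s', Aff s' (f '' A)) : Function.Surjective f := by
  have key : ∀ j ≤ n, ∃ A : Set (Fin n → k), Aff true A ∧ dm A ≤ j ∧ j ≤ dm (f '' A) := by
    intro j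
    induction j with
    | zero => intro _; exact ⟨{0}, aff_singleton _ _, (dm_singleton _).le, Nat.zero_le _⟩
    | succ j ih =>
      intro hj
      obtain ⟨A, hA, h1, h2⟩ := ih (by omega)
      obtain ⟨a, ha⟩ := hA.1
      obtain ⟨u, hu⟩ : ∃ u, u ∉ A := by
        by_contra hc; push Not at hc
        have : A = univ := eq_univ_of_forall hc
        rw [this, dm_univ] at h1; omega
      obtain ⟨s', hs'⟩ := hf _ A hA
      have h4 := dm_lt hs' (image_mono (sub_join true A a u))
        (mem_image_of_mem f (mem_join true A a u ha))
        (fun hc => hu ((hinj.mem_set_image).1 hc))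
      exact ⟨_, aff_join hA a u, (dm_join hA ha u).trans (by omega), by omega⟩
  obtain ⟨A, hA, -, h⟩ := key n le_rfl
  obtain ⟨s', hs'⟩ := hf _ A hA
  have := eq_of_dm hs' (subset_univ _) (by rw [dm_univ]; exact h)
  intro y
  have hy : y ∈ f '' A := by rw [this]; trivial
  obtain ⟨x, -, hx⟩ := hy
  exact ⟨x, hx⟩

theorem image_line (hinj : Function.Injective f)
    (hf : ∀ s A, Aff s A → ∃ s', Aff s' (f '' A)) (s : Bool) (p q : Fin n → k) (h : p ≠ q) :
    ∃ s', f '' line s p q = line s' (f p) (f q) := by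
  obtain ⟨s', hs'⟩ := hf s _ (aff_line s p q)
  refine ⟨s', (line_eq' ?_ hs' (mem_image_of_mem f (line_left _ _ _))
    (mem_image_of_mem f (line_right _ _ _)) (hinj.ne h)).symm⟩
  exact (dm_image hinj hf n s _ (aff_line s p q) (by omega)).trans (dm_line _ _ _)

theorem pure_lines (hinj : Function.Injective f)
    (hf : ∀ s A, Aff s A → ∃ s', Aff s' (f '' A)) (p q : Fin n → k) 
    (h : ¬ TS (q - p)) (t : Bool) :
    ∃ s, f '' line s p q = line t (f p) (f q) := by
  have hpq : p ≠ q := by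
    rintro rfl
    exact h (by rw [sub_self]; exact ⟨1, 0, one_ne_zero, by simp, by funext i; simp⟩)
  obtain ⟨s1, h1⟩ := image_line hinj hf true p q hpq
  obtain ⟨s2, h2⟩ := image_line hinj hf false p q hpq
  have hne : s1 ≠ s2 := by
    rintro rfl
    exact h (line_TS (hinj.image_injective (h1.trans h2.symm)))
  by_cases ht : s1 = t
  · exact ⟨true, ht ▸ h1⟩
  · have : s2 = t := by cases s1 <;> cases s2 <;> cases t <;> simp_all
    exact ⟨false, this ▸ h2⟩

end maps
end St6

namespace St6
section key
variable [DivisionRing k] {n : ℕ} {f : (Fin n → k) → (Fin n → k)}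

theorem TS_zero : TS (0 : Fin n → k) := ⟨1, 0, one_ne_zero, by simp, by funext i; simp⟩

theorem smul_mem_line {x0 : Fin n → k} {l : k} (w : Fin n → k) {x1 : Fin n → k}
    (hl : l ≠ 0) (h1 : x1 - x0 = fun i => l * w i) (c : k) {x : Fin n → k}
    (h : x - x0 = fun i => c * w i) : x ∈ line true x0 x1 := by
  refine mem_line.2 ⟨c * l⁻¹, ?_⟩
  rw [h1, ← sub_eq_iff_eq_add', h]
  funext i; simp [act, mul_assoc, hl]

/-- All points of a set with pairwise two-sided differences, not on one line, lie in a central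
lattice. -/
theorem lattice {X : Set (Fin n → k)} (hX : ∀ x ∈ X, ∀ y ∈ X, TS (y - x))
    {x0 x1 x2 : Fin n → k} (h0 : x0 ∈ X) (h1 : x1 ∈ X) (h2 : x2 ∈ X) (h01 : x0 ≠ x1)
    (h012 : x2 ∉ line true x0 x1) :
    ∃ l : k, l ≠ 0 ∧ ∀ x ∈ X, ∃ z : Fin n → k, (∀ i c, c * z i = z i * c) ∧
      x - x0 = fun i => l * z i := by
  obtain ⟨l, w, hl, hw, h⟩ := hX _ h0 _ h1
  have hw0 : w ≠ 0 := by
    rintro rfl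
    apply h01
    have : x1 - x0 = 0 := by rw [h]; funext i; simp
    exact (sub_eq_zero.1 this).symm
  refine ⟨l, hl, ?_⟩
  have A : ∀ x ∈ X, x ∉ line true x0 x1 → ∃ z : Fin n → k, (∀ i c, c * z i = z i * c) ∧
      x - x0 = fun i => l * z i := by
    intro x hx hxl
    refine triangle hl hw hw0 (hX _ h0 _ hx) ?_ ?_
    · rw [← h, sub_sub_sub_cancel_right]; exact hX _ h1 _ hx
    · intro c hc
      exact hxl (smul_mem_line w hl h c hc)
  obtain ⟨w2, hw2, e2⟩ := A x2 h2 h012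
  have h02 : x0 ≠ x2 := by rintro rfl; exact h012 (line_left _ _ _)
  have hw20 : w2 ≠ 0 := by
    rintro rfl
    apply h02
    have : x2 - x0 = 0 := by rw [e2]; funext i; simp
    exact (sub_eq_zero.1 this).symm
  intro x hx
  by_cases hxl : x ∈ line true x0 x1
  · by_cases hx0 : x = x0
    · exact ⟨0, by simp, by rw [hx0]; funext i; simp⟩
    · refine triangle hl hw2 hw20 (hX _ h0 _ hx) ?_ ?_
      · rw [← e2, sub_sub_sub_cancel_right]; exact hX _ h2 _ hx
      · intro c hc
        have hx2 := smul_mem_line w2 hl e2 c hc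
        have l1 := line_eq (line_left _ _ _) hx2 (Ne.symm hx0)
        have l2 := line_eq (line_left _ _ _) hxl (Ne.symm hx0)
        apply h012
        rw [← l2, l1]; exact line_right _ _ _
  · exact A x hx hxl

theorem exists_generic (hk : ∃ b c : k, b * c ≠ c * b) (hn : 2 ≤ n) 
    {X : Set (Fin n → k)} {x0 : Fin n → k} {l : k} (hl : l ≠ 0)
    (hX : ∀ x ∈ X, ∃ z : Fin n → k, (∀ i c, c * z i = z i * c) ∧ x - x0 = fun i => l * z i) :
    (∃ y, ∀ x ∈ X, ¬ TS (x - y)) ∧ 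
    (3 ≤ n → ∀ (s : Bool) (P : Set (Fin n → k)), Aff s P → x0 ∈ P → dm P ≤ 2 →
      ∃ y, y ∉ P ∧ ∀ x ∈ X, ¬ TS (x - y)) := by
  obtain ⟨u, hu⟩ := generic hn hk
  have main : ∀ v : Fin n → k, (∀ i c, c * v i = v i * c) → ∀ x ∈ X,
      ¬ TS (x - (x0 + fun i => l * (u i + v i))) := by
    intro v hv x hx hTS
    obtain ⟨z, hz, hxz⟩ := hX x hx
    refine hu (z - v) (fun i => central_sub (hz i) (hv i)) (TS_unscale hl ?_)
    have := TS_neg hTS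
    rw [← sub_sub, hxz] at this
    convert this using 1
    funext i
    simp only [Pi.sub_apply, Pi.neg_apply, ← mul_sub, ← mul_neg]
    congr 1; abel
  refine ⟨⟨_, main 0 (by simp)⟩, ?_⟩
  intro hn3 s P hP hx0 hdm
  obtain ⟨j, hj⟩ : ∃ j : Fin n, x0 + (fun i => l * (Pi.single j 1 : Fin n → k) i) ∉ P := by
    by_contra hc; push Not at hc
    have : piv P = Finset.univ := by
      ext j
      simp only [Finset.mem_univ, iff_true]
      refine mem_piv.2 ⟨_, hc j, x0, hx0, ?_, by simp [hl]⟩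
      intro i hi
      simp [hi.ne]
    rw [dm, this] at hdm
    simp at hdm; omega
  by_cases h0 : x0 + (fun i => l * (u i + (0 : Fin n → k) i)) ∈ P
  · refine ⟨x0 + (fun i => l * (u i + (Pi.single j 1 : Fin n → k) i)), ?_, main _ ?_⟩
    · intro h1
      apply hj
      have := hP.add hx0 h1 h0
      convert this using 1
      funext i
      simp only [Pi.add_apply, Pi.sub_apply, mul_add, Pi.zero_apply, mul_zero]; abel
    · intro i c
      by_cases hij : i = j
      · subst hij; simp
      · simp [hij]
  · exact ⟨_, h0, main 0 (by simp)⟩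

theorem bool3 {a b c : Bool} (h : ¬ a = b) (h' : ¬ a = c) : b = c := by
  cases a <;> cases b <;> cases c <;> simp_all

theorem key (hinj : Function.Injective f)
    (hf : ∀ s A, Aff s A → ∃ s', Aff s' (f '' A)) {p q : Fin n → k} (hpq : p ≠ q)
    (hTS : TS (q - p)) : TS (f q - f p) := by
  by_contra hbad
  have hsurj := surj hinj hf
  obtain ⟨s, hs⟩ := image_line hinj hf true p q hpq
  obtain ⟨t, ht⟩ : ∃ t, line t (f p) (f q) ≠ line s (f p) (f q) := by
    by_contra hc; push Not at hc
    exact hbad (line_TS ((hc true).trans (hc false).symm))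
  have hk : ∃ b c : k, b * c ≠ c * b := by
    by_contra hc; push Not at hc
    exact hbad ⟨1, f q - f p, one_ne_zero, fun i c => hc _ _, by funext i; simp⟩
  have hfpq : f p ≠ f q := hinj.ne hpq
  set r := line t (f p) (f q) with hr
  -- preimage of r is not a line
  have hnol : ∀ s0 x y, f '' line s0 x y ≠ r := by
    intro s0 x y h
    have hp : p ∈ line s0 x y := by
      rw [← hinj.mem_set_image, h]; exact line_left _ _ _
    have hq : q ∈ line s0 x y := by
      rw [← hinj.mem_set_image, h]; exact line_right _ _ _
    rw [← line_eq hp hq hpq, TS_line hTS s0 true, hs] at h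
    exact ht h.symm
  have hX : ∀ x ∈ f ⁻¹' r, ∀ y ∈ f ⁻¹' r, TS (y - x) := by
    intro x hx y hy
    by_contra hxy
    have hne : x ≠ y := by rintro rfl; exact hxy (by rw [sub_self]; exact TS_zero)
    obtain ⟨s0, h0⟩ := pure_lines hinj hf x y hxy t
    exact hnol s0 x y (h0.trans (line_eq hx hy (hinj.ne hne)))
  obtain ⟨x2, hx2, hx2'⟩ : ∃ x2, f x2 ∈ r ∧ x2 ∉ line true p q := by
    by_contra hc; push Not at hc
    apply ht
    refine eq_of_dm (aff_line _ _ _) ?_ ((dm_line _ _ _).trans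
      (one_le_dm (line_left _ _ _) (line_right _ _ _) hfpq))
    intro y hy
    obtain ⟨x, rfl⟩ := hsurj y
    rw [← hs]
    exact mem_image_of_mem f (hc x hy)
  have hp : p ∈ f ⁻¹' r := line_left _ _ _
  have hq : q ∈ f ⁻¹' r := line_right _ _ _
  have hn : 2 ≤ n := (two_le_dm_plane hpq hx2').trans (dm_le _)
  obtain ⟨l, hl, hlat⟩ := lattice hX hp hq hx2 hpq hx2'
  obtain ⟨g2, g3⟩ := exists_generic hk hn hl hlat
  have offr : ∀ y, (∀ x ∈ f ⁻¹' r, ¬ TS (x - y)) → f y ∉ r := by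
    intro y hy hc
    exact hy y hc (by rw [sub_self]; exact TS_zero)
  rcases Nat.lt_or_ge n 3 with hn3 | hn3
  · -- the planar case
    have hn2 : n = 2 := by omega
    obtain ⟨y, hy⟩ := g2
    have hyr := offr y hy
    have hall : plane t (f p) (f q) (f y) = univ := by
      refine eq_of_dm (aff_plane _ _ _ _) (subset_univ _) ?_
      rw [dm_univ]
      have := two_le_dm_plane hfpq hyr
      omega
    -- every two-sided point is on the parallel
    have hpar : ∀ z, TS (z - y) → f z ∈ line t (f y) (f y + (f q - f p)) := by
      intro z hz
      have hmem : f z ∈ plane t (f p) (f q) (f y) := by rw [hall]; trivial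
      obtain ⟨a, ha, d, hd⟩ := hmem
      obtain ⟨c, rfl⟩ := mem_line.1 ha
      by_cases hd1 : 1 - d = 0
      · have : d = 1 := (sub_eq_zero.1 hd1).symm
        subst this
        refine mem_line.2 ⟨c, ?_⟩
        rw [hd, act_one, add_sub_cancel_left]; abel
      · exfalso
        obtain ⟨e, he⟩ := act_act (n := n) t (1 - d)⁻¹ c
        obtain ⟨x, hx⟩ := hsurj (f p + act t e (f q - f p))
        have hxr : f x ∈ r := by rw [hx]; exact mem_line.2 ⟨e, rfl⟩
        have hz' : f z ∈ line t (f y) (f x) := by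
          refine mem_line.2 ⟨1 - d, ?_⟩
          have e1 : act t (1 - d) (act t e (f q - f p)) = act t c (f q - f p) := by
            rw [← he, act_inv _ _ hd1]
          have e2 : f x - f y = act t e (f q - f p) - (f y - f p) := by rw [hx]; abel
          rw [hd, e2, act_sub t (1 - d), e1, sub_act, act_one]; abel
        obtain ⟨s0, h0⟩ := pure_lines hinj hf y x (hy x hxr) t
        rw [← h0, hinj.mem_set_image] at hz'
        have hzy : y ≠ z := by
          rintro rfl
          -- then f y in r
          have : f y + act t (1 - d) (f x - f y) = f y := by
            have e1 : act t (1 - d) (act t e (f q - f p)) = act t c (f q - f p) := by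
              rw [← he, act_inv _ _ hd1]
            have e2 : f x - f y = act t e (f q - f p) - (f y - f p) := by rw [hx]; abel
            rw [e2, act_sub t (1 - d), e1, sub_act, act_one]
            nth_rewrite 4 [hd]
            abel
          have h3 : act t (1 - d) (f x - f y) = 0 := by simpa using this
          have h4 : f x - f y = 0 := by
            by_contra hne
            obtain ⟨j, hj⟩ : ∃ j, (f x - f y) j ≠ 0 := by
              by_contra hc; push Not at hc; exact hne (funext hc)
            exact act_coord_ne t (1 - d) _ j hj hd1 (congrFun h3 j)
          exact hyr ((sub_eq_zero.1 h4) ▸ hxr)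
        have e3 := line_eq (line_left _ _ _) hz' hzy
        have hxm : x ∈ line s0 y z := by rw [e3]; exact line_right _ _ _
        have hxy : y ≠ x := by
          rintro rfl; exact hyr hxr
        have e4 : ∀ s1, line s1 y x = line s1 y z := fun s1 =>
          line_eq (line_left _ _ _) (TS_line hz s0 s1 ▸ hxm) hxy
        exact hy x hxr (line_TS (by rw [e4, e4, TS_line hz true false]))
    have hline : ∀ w : Fin n → k, w ≠ 0 → (∀ i c, c * w i = w i * c) →
        f '' line true y (y + w) = line t (f y) (f y + (f q - f p)) := by
      intro w hw0 hw
      obtain ⟨s', hs'⟩ := hf true _ (aff_line true y (y + w))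
      refine eq_of_dm hs' ?_ ((dm_line _ _ _).trans ?_)
      · rintro _ ⟨z, hz, rfl⟩
        apply hpar
        obtain ⟨c, rfl⟩ := mem_line.1 hz
        by_cases hc : c = 0
        · subst hc; rw [act_zero, add_zero, sub_self]; exact TS_zero
        · refine ⟨c, w, hc, hw, ?_⟩
          funext i; simp [act]
      · exact one_le_dm (mem_image_of_mem f (line_left _ _ _))
          (mem_image_of_mem f (line_right _ _ _)) (hinj.ne (by simpa using hw0))
    have hsc : ∀ j : Fin n, ∀ i c, c * (Pi.single j 1 : Fin n → k) i = (Pi.single j 1 : Fin n → k) i * c := by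
      intro j i c
      by_cases hij : i = j
      · subst hij; simp
      · simp [hij]
    let i0 : Fin n := ⟨0, by omega⟩
    let i1 : Fin n := ⟨1, by omega⟩
    have h01 : i1 ≠ i0 := by simp [i0, i1]
    have l0 := hline (Pi.single i0 1) (by simp) (hsc i0)
    have l1 := hline (Pi.single i1 1) (by simp) (hsc i1)
    have l2 := hinj.image_injective (l0.trans l1.symm)
    have hm : y + Pi.single i1 1 ∈ line true y (y + Pi.single i0 1) := by
      rw [l2]; exact line_right _ _ _
    obtain ⟨c, hc⟩ := mem_line.1 hm
    have := congrFun (add_left_cancel hc) i1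
    simp [act, h01] at this
  · -- n ≥ 3
    have hP2 : ∀ s0, line s0 p q = line true p q := fun s0 => TS_line hTS s0 true
    have hPl : ∀ s0, plane s0 p q x2 ⊆ plane true p q x2 := by
      intro s0
      refine plane_sub' (aff_plane _ _ _ _) (plane1 _ _ _ _) ?_ ?_
      · rw [hP2]; exact line_sub (aff_plane _ _ _ _) (plane1 _ _ _ _) (plane2 _ _ _ _)
      · rw [TS_line (hX p hp x2 hx2) s0 true]
        exact line_sub (aff_plane _ _ _ _) (plane1 _ _ _ _) (plane3 _ _ _ _)
    obtain ⟨y, hyP, hy⟩ := g3 hn3 true (plane true p q x2) (aff_plane _ _ _ _) (plane1 _ _ _ _)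
      (dm_plane _ _ _ _)
    have hyr := offr y hy
    have step : ∀ s0, ∀ a ∈ f ⁻¹' r, ∀ b ∈ f ⁻¹' r, a ≠ b →
        f '' line s0 y a = line t (f y) (f a) → f '' line s0 y b = line t (f y) (f b) → False := by
      intro s0 a ha b hb hab h1 h2
      obtain ⟨s', hs'⟩ := hf s0 _ (aff_plane s0 y a b)
      have sub : plane t (f y) (f a) (f b) ⊆ f '' plane s0 y a b := by
        refine plane_sub' hs' (mem_image_of_mem f (plane1 _ _ _ _)) ?_ ?_
        · rw [← h1]
          exact image_mono (line_sub (aff_plane _ _ _ _) (plane1 _ _ _ _) (plane2 _ _ _ _))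
        · rw [← h2]
          exact image_mono (line_sub (aff_plane _ _ _ _) (plane1 _ _ _ _) (plane3 _ _ _ _))
      have hya : f y ≠ f a := fun h => hyr (by rw [h]; exact ha)
      have hrab : line t (f a) (f b) = r := line_eq ha hb (hinj.ne hab)
      have hnb : f b ∉ line t (f y) (f a) := by
        intro h
        apply hyr
        have := line_eq (line_right _ _ _) h (hinj.ne hab)
        rw [← hrab, this]; exact line_left _ _ _
      have heq := eq_of_dm (aff_plane _ _ _ _) sub
        (((dm_image hinj hf n s0 _ (aff_plane s0 y a b) (by omega)).trans (dm_plane _ _ _ _)).trans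
          (two_le_dm_plane hya hnb))
      have hXA : ∀ x ∈ f ⁻¹' r, x ∈ plane s0 y a b := by
        intro x hx
        rw [← hinj.mem_set_image, ← heq]
        have hx : f x ∈ r := hx
        rw [← hrab] at hx
        exact line_sub (aff_plane _ _ _ _) (plane2 _ _ _ _) (plane3 _ _ _ _) hx
      have hPA := plane_sub (aff_plane s0 y a b) (hXA p hp) (hXA q hq) (hXA x2 hx2)
      have hPA' := eq_of_dm (aff_plane s0 p q x2) hPA
        ((dm_plane _ _ _ _).trans (two_le_dm_plane hpq (by rw [hP2]; exact hx2')))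
      apply hyP
      apply hPl s0
      rw [hPA']
      exact plane1 _ _ _ _
    obtain ⟨s0, h0⟩ := pure_lines hinj hf y p (hy p hp) t
    obtain ⟨s1, h1⟩ := pure_lines hinj hf y q (hy q hq) t
    obtain ⟨s2, h2⟩ := pure_lines hinj hf y x2 (hy x2 hx2) t
    have hpx : p ≠ x2 := by rintro rfl; exact hx2' (line_left _ _ _)
    have hqx : q ≠ x2 := by rintro rfl; exact hx2' (line_right _ _ _)
    by_cases e01 : s0 = s1
    · subst e01; exact step s0 p hp q hq hpq h0 h1
    by_cases e02 : s0 = s2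
    · subst e02; exact step s0 p hp x2 hx2 hpx h0 h2
    have e12 : s1 = s2 := bool3 e01 e02
    subst e12
    exact step s1 q hq x2 hx2 hqx h1 h2

/-- affineness on the side `s` from affineness on some side and closure under `s`-lines -/
theorem aff_of_lines {s s' : Bool} {A : Set (Fin n → k)} (hA : Aff s A)
    (h : ∀ z ∈ A, ∀ y ∈ A, z ≠ y → line s' z y ⊆ A) : Aff s' A := by
  refine ⟨hA.1, ?_⟩
  intro x hx y hy z hz c
  by_cases hzy : z = y
  · subst hzy; rw [sub_self, act_vzero, add_zero]; exact hx
  have h1 := h z hz y hy hzy (mem_line.2 ⟨c, rfl⟩)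
  have := hA.add hx h1 hz
  simpa using this

theorem two_two (hinj : Function.Injective f)
    (hf : ∀ s A, Aff s A → ∃ s', Aff s' (f '' A)) {A : Set (Fin n → k)} (hA : ∀ s, Aff s A) :
    ∀ s, Aff s (f '' A) := by
  intro t
  obtain ⟨s, hs⟩ := hf true A (hA true)
  refine aff_of_lines hs ?_
  rintro _ ⟨z, hz, rfl⟩ _ ⟨y, hy, rfl⟩ hne
  have hzy : z ≠ y := fun h => hne (by rw [h])
  by_cases hTS : TS (y - z)
  · obtain ⟨s1, h1⟩ := image_line hinj hf true z y hzy
    rw [TS_line (key hinj hf hzy hTS) t s1, ← h1]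
    exact image_mono (line_sub (hA _) hz hy)
  · obtain ⟨s1, h1⟩ := pure_lines hinj hf z y hTS t
    rw [← h1]
    exact image_mono (line_sub (hA _) hz hy)

theorem pure_pure (hinj : Function.Injective f)
    (hf : ∀ s A, Aff s A → ∃ s', Aff s' (f '' A)) {A : Set (Fin n → k)} {s : Bool} (hA : Aff s A)
    (h : ∀ t, Aff t (f '' A)) : ∀ t, Aff t A := by
  intro t
  refine aff_of_lines hA ?_
  intro z hz y hy hzy
  obtain ⟨s1, h1⟩ := image_line hinj hf t z y hzy
  have : f '' line t z y ⊆ f '' A := by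
    rw [h1]; exact line_sub (h _) (mem_image_of_mem f hz) (mem_image_of_mem f hy)
  exact (image_subset_image_iff hinj).1 this

end key
end St6

/-- Corollary of Lemma 3: such an `f` takes two-sided affine subspaces to two-sided
ones and purely left/right affine subspaces to purely left/right ones. -/
theorem stmt_6 [DivisionRing k] {n : ℕ} (f : (Fin n → k) → (Fin n → k))
    (hinj : Function.Injective f)
    (hf : ∀ A : Set (Fin n → k), (IsLeftAff A ∨ IsRightAff A) →
      (IsLeftAff (f '' A) ∨ IsRightAff (f '' A))) :
    (∀ A : Set (Fin n → k), IsLeftAff A ∧ IsRightAff A →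
        IsLeftAff (f '' A) ∧ IsRightAff (f '' A)) ∧
    (∀ A : Set (Fin n → k),
      ((IsLeftAff A ∧ ¬ IsRightAff A) ∨ (IsRightAff A ∧ ¬ IsLeftAff A)) →
      ((IsLeftAff (f '' A) ∧ ¬ IsRightAff (f '' A)) ∨
        (IsRightAff (f '' A) ∧ ¬ IsLeftAff (f '' A)))) := by
  have hf' : ∀ s A, St6.Aff s A → ∃ s', St6.Aff s' (f '' A) := by
    intro s A hA
    have h1 : IsLeftAff A ∨ IsRightAff A := by
      rw [St6.isLeftAff_iff, St6.isRightAff_iff]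
      cases s
      · exact Or.inr hA
      · exact Or.inl hA
    have h2 := hf A h1
    rw [St6.isLeftAff_iff, St6.isRightAff_iff] at h2
    rcases h2 with h | h
    · exact ⟨_, h⟩
    · exact ⟨_, h⟩
  simp only [St6.isLeftAff_iff, St6.isRightAff_iff]
  constructor
  · rintro A ⟨h1, h2⟩
    have := St6.two_two hinj hf' (A := A) (by intro s; cases s <;> assumption)
    exact ⟨this true, this false⟩
  · intro A hA
    have hex : ∃ s, St6.Aff s A := by
      rcases hA with h | h
      · exact ⟨_, h.1⟩
      · exact ⟨_, h.1⟩
    obtain ⟨s, hs⟩ := hex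
    have hnot : ¬ (St6.Aff true (f '' A) ∧ St6.Aff false (f '' A)) := by
      rintro ⟨h1, h2⟩
      have h3 := St6.pure_pure hinj hf' hs (by intro t; cases t <;> assumption)
      rcases hA with h | h
      · exact h.2 (h3 _)
      · exact h.2 (h3 _)
    obtain ⟨s', hs'⟩ := hf' s A hs
    cases s'
    · exact Or.inr ⟨hs', fun h => hnot ⟨h, hs'⟩⟩
    · exact Or.inl ⟨hs', fun h => hnot ⟨hs', h⟩⟩
end

section
/- Let k be a division ring, n ≥ 3, and P, P' two-sided affine 2-planes in k^n. Then there exists a finite sequence P = P_0, P_1, ..., P_m = P' of two-sided affine 2-planes such that P_i ∩ P_{i−1} is an affine line for each i = 1,...,m. -/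
open Function Set

variable {k : Type*}

/-- Two-sided 2-dimensional subspaces. -/
def TwoS [DivisionRing k] {n : ℕ} (S : Submodule k (Fin n → k)) : Prop :=
  Module.finrank k S = 2 ∧ ∃ T : Submodule kᵐᵒᵖ (Fin n → k),
    (T : Set (Fin n → k)) = (S : Set (Fin n → k)) ∧ Module.finrank kᵐᵒᵖ T = 2

def tr [DivisionRing k] {n : ℕ} (v : Fin n → k) (S : Submodule k (Fin n → k)) :
    Set (Fin n → k) := (v + ·) '' (S : Set (Fin n → k))

def Good [DivisionRing k] {n : ℕ} (P : Set (Fin n → k)) : Prop := HasDimL P 2 ∧ HasDimR P 2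

def AdjP [DivisionRing k] {n : ℕ} (P Q : Set (Fin n → k)) : Prop :=
  Good Q ∧ HasDimL (Q ∩ P) 1

theorem mem_tr [DivisionRing k] {n : ℕ} (v x : Fin n → k) (S : Submodule k (Fin n → k)) :
    x ∈ tr v S ↔ x - v ∈ S := by
  unfold tr
  constructor
  · rintro ⟨y, hy, rfl⟩
    simpa using hy
  · intro h
    exact ⟨x - v, h, by simp⟩

theorem good_tr [DivisionRing k] {n : ℕ} (v : Fin n → k) (S : Submodule k (Fin n → k))
    (hS : TwoS S) : Good (tr v S) := by
  obtain ⟨h, T, hT, hd⟩ := hS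
  exact ⟨⟨v, S, rfl, h⟩, ⟨v, T, by rw [hT]; rfl, hd⟩⟩

theorem good_elim [DivisionRing k] {n : ℕ} (P : Set (Fin n → k)) (h : Good P) :
    ∃ v S, TwoS S ∧ P = tr v S := by
  obtain ⟨⟨v, S, hS, h2⟩, ⟨w, T, hT, hd⟩⟩ := h
  refine ⟨v, S, ⟨h2, T, ?_, hd⟩, hS⟩
  have key : ∀ y, y ∈ S ↔ v + y - w ∈ T := by
    intro y
    have h1 : v + y ∈ P ↔ y ∈ S := by rw [hS]; simp
    rw [← h1, hT]
    constructor
    · rintro ⟨z, hz, hzz⟩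
      have : v + y - w = z := by rw [← hzz]; simp
      rw [this]; exact hz
    · intro h
      exact ⟨_, h, by simp⟩
  have hvw : v - w ∈ T := by
    have := (key 0).1 S.zero_mem
    simpa using this
  ext y
  simp only [SetLike.mem_coe]
  rw [key y]
  have : v + y - w = y + (v - w) := by abel
  rw [this]
  exact (T.add_mem_iff_left hvw).symm

theorem conn_share [DivisionRing k] {n : ℕ} (v u : Fin n → k) (hu : u ≠ 0)
    (S T : Submodule k (Fin n → k)) (hS : TwoS S) (hT : TwoS T) (huS : u ∈ S) (huT : u ∈ T) :
    Relation.ReflTransGen AdjP (tr v S) (tr v T) := by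
  by_cases hST : S = T
  · rw [hST]
  · apply Relation.ReflTransGen.single
    refine ⟨good_tr v T hT, v, T ⊓ S, ?_, ?_⟩
    · change _ = tr v (T ⊓ S)
      ext x
      simp only [Set.mem_inter_iff, mem_tr, Submodule.mem_inf]
    · have h1 : 0 < Module.finrank k (T ⊓ S : Submodule k (Fin n → k)) := by
        have : Nontrivial (T ⊓ S : Submodule k (Fin n → k)) :=
          ⟨⟨⟨u, huT, huS⟩, 0, fun h => hu (congrArg Subtype.val h)⟩⟩
        exact Module.finrank_pos
      have h2 : Module.finrank k (T ⊓ S : Submodule k (Fin n → k)) < 2 := by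
        by_contra hc
        push Not at hc
        have e1 : T ⊓ S = T := Submodule.eq_of_le_of_finrank_le inf_le_left (by rw [hT.1]; exact hc)
        have e2 : T ⊓ S = S := Submodule.eq_of_le_of_finrank_le inf_le_right (by rw [hS.1]; exact hc)
        exact hST (e2.symm.trans e1)
      omega

def Cen [DivisionRing k] {n : ℕ} (x : Fin n → k) : Prop := ∀ (c : k) j, c * x j = x j * c

theorem Cen.op_smul [DivisionRing k] {n : ℕ} {x : Fin n → k} (h : Cen x) (c : k) :
    MulOpposite.op c • x = c • x := by
  ext j
  simp [h c j]

theorem exists_cen [DivisionRing k] {n : ℕ} (S : Submodule k (Fin n → k)) (hS : TwoS S) :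
    ∃ x ∈ S, x ≠ 0 ∧ Cen x := by
  classical
  obtain ⟨h2, T, hT, -⟩ := hS
  have hmem : ∀ y, y ∈ T ↔ y ∈ S := fun y => by
    rw [← SetLike.mem_coe, hT, SetLike.mem_coe]
  have hne : ∃ m, ∃ x ∈ S, x ≠ 0 ∧ (Finset.univ.filter (fun i => x i ≠ 0)).card = m := by
    have : S ≠ ⊥ := by
      rintro rfl
      simp at h2
    obtain ⟨x, hx, h0⟩ := Submodule.exists_mem_ne_zero_of_ne_bot this
    exact ⟨_, x, hx, h0, rfl⟩
  obtain ⟨x, hx, h0, hm⟩ := Nat.find_spec hne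
  have hmin : ∀ y ∈ S, y ≠ 0 → (Finset.univ.filter (fun i => x i ≠ 0)).card ≤
      (Finset.univ.filter (fun i => y i ≠ 0)).card := by
    intro y hy hy0
    rw [hm]
    exact Nat.find_min' hne ⟨y, hy, hy0, rfl⟩
  obtain ⟨i, hi⟩ := Function.ne_iff.1 h0
  simp only [Pi.zero_apply] at hi
  refine ⟨(x i)⁻¹ • x, S.smul_mem _ hx, smul_ne_zero (inv_ne_zero hi) h0, ?_⟩
  intro c j
  set z := (x i)⁻¹ • x with hz
  have hzS : z ∈ S := S.smul_mem _ hx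
  have hzi : z i = 1 := by simp [hz, hi]
  have hyS : c • z - MulOpposite.op c • z ∈ S := by
    refine S.sub_mem (S.smul_mem _ hzS) ?_
    rw [← hmem]
    exact T.smul_mem _ ((hmem z).2 hzS)
  by_contra hc
  have hy0 : c • z - MulOpposite.op c • z ≠ 0 := by
    intro h
    apply hc
    have := congrFun h j
    simpa [sub_eq_zero] using this
  have := hmin _ hyS hy0
  refine absurd this (not_le.2 (Finset.card_lt_card ?_))
  rw [Finset.ssubset_iff_of_subset]
  · refine ⟨i, by simpa using hi, ?_⟩
    simp [hzi]
  · intro l hl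
    simp only [Finset.mem_filter, Finset.mem_univ, true_and] at hl ⊢
    intro hl0
    apply hl
    simp [hz, hl0]

theorem twoS_span [DivisionRing k] {n : ℕ} (a b : Fin n → k) (ha : Cen a) (hb : Cen b)
    (hli : LinearIndependent k ![a, b]) : TwoS (Submodule.span k {a, b}) := by
  have hli' : LinearIndependent kᵐᵒᵖ ![a, b] := by
    rw [LinearIndependent.pair_iff] at hli ⊢
    intro s t h
    have := hli s.unop t.unop (by
      rw [← ha.op_smul, ← hb.op_smul]; simpa using h)
    simpa using this
  have e : ({a, b} : Set (Fin n → k)) = Set.range ![a, b] := by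
    simp [Set.pair_comm]
  refine ⟨?_, Submodule.span kᵐᵒᵖ {a, b}, ?_, ?_⟩
  · rw [e, finrank_span_eq_card hli]; simp
  · ext x
    simp only [SetLike.mem_coe, Submodule.mem_span_pair]
    constructor
    · rintro ⟨s, t, rfl⟩
      exact ⟨s.unop, t.unop, by rw [← ha.op_smul, ← hb.op_smul]; simp⟩
    · rintro ⟨s, t, rfl⟩
      exact ⟨MulOpposite.op s, MulOpposite.op t, by rw [ha.op_smul, hb.op_smul]⟩
  · rw [e, finrank_span_eq_card hli']; simp

theorem conn_dir [DivisionRing k] {n : ℕ} (v : Fin n → k)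
    (S T : Submodule k (Fin n → k)) (hS : TwoS S) (hT : TwoS T) :
    Relation.ReflTransGen AdjP (tr v S) (tr v T) := by
  obtain ⟨a, haS, ha0, ha⟩ := exists_cen S hS
  obtain ⟨b, hbT, hb0, hb⟩ := exists_cen T hT
  by_cases hli : LinearIndependent k ![a, b]
  · have h := twoS_span a b ha hb hli
    exact (conn_share v a ha0 S _ hS h haS (Submodule.subset_span (by simp))).trans
      (conn_share v b hb0 _ T h hT (Submodule.subset_span (by simp)) hbT)
  · rw [LinearIndependent.pair_iff' ha0] at hli
    push Not at hli
    obtain ⟨s, hs⟩ := hli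
    exact conn_share v b hb0 S T hS hT (hs ▸ S.smul_mem s haS) hbT

theorem tr_eq [DivisionRing k] {n : ℕ} (v w : Fin n → k)
    (S : Submodule k (Fin n → k)) (hw : w ∈ S) : tr v S = tr (v + w) S := by
  ext x
  rw [mem_tr, mem_tr, ← sub_sub]
  exact (S.sub_mem_iff_left hw).symm

theorem conn_single [DivisionRing k] {n : ℕ} (v : Fin n → k) (i : Fin n) (c : k)
    (S : Submodule k (Fin n → k)) (hS : TwoS S) :
    Relation.ReflTransGen AdjP (tr v S) (tr (v + Pi.single i c) S) := by
  obtain ⟨a, haS, ha0, ha⟩ := exists_cen S hS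
  have hce : Cen (Pi.single i (1 : k) : Fin n → k) := by
    intro d j
    by_cases h : j = i
    · subst h; simp
    · simp [h]
  have hc : (Pi.single i c : Fin n → k) = c • Pi.single i (1 : k) := by
    rw [← Pi.single_smul]; simp
  by_cases hli : LinearIndependent k ![a, Pi.single i (1 : k)]
  · have h := twoS_span a _ ha hce hli
    have haW := Submodule.subset_span (R := k) (s := {a, Pi.single i (1 : k)}) (a := a) (by simp)
    have h1 := conn_share v a ha0 S _ hS h haS haW
    have h2 := conn_share (v + Pi.single i c) a ha0 _ S h hS haW haS
    rw [← tr_eq] at h2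
    · exact h1.trans h2
    · rw [hc]
      exact Submodule.smul_mem _ _ (Submodule.subset_span (by simp))
  · rw [LinearIndependent.pair_iff' ha0] at hli
    push Not at hli
    obtain ⟨s, hs⟩ := hli
    rw [← tr_eq]
    rw [hc, ← hs]
    exact S.smul_mem _ (S.smul_mem _ haS)

theorem conn_trans [DivisionRing k] {n : ℕ} (v w : Fin n → k)
    (S : Submodule k (Fin n → k)) (hS : TwoS S) :
    Relation.ReflTransGen AdjP (tr v S) (tr w S) := by
  have key : ∀ s : Finset (Fin n), Relation.ReflTransGen AdjP (tr v S)
      (tr (v + ∑ i ∈ s, Pi.single i ((w - v) i)) S) := by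
    intro s
    induction s using Finset.induction_on with
    | empty => simp only [Finset.sum_empty, add_zero]; exact Relation.ReflTransGen.refl
    | insert i s hi ih =>
      rw [Finset.sum_insert hi, add_comm (Pi.single i _), ← add_assoc]
      exact ih.trans (conn_single _ _ _ S hS)
  have := key Finset.univ
  rw [Finset.univ_sum_single] at this
  simpa using this

theorem chain_of_conn [DivisionRing k] {n : ℕ} (P P' : Set (Fin n → k)) (hP : Good P)
    (h : Relation.ReflTransGen AdjP P P') :
    ∃ (m : ℕ) (Q : ℕ → Set (Fin n → k)), Q 0 = P ∧ Q m = P' ∧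
      (∀ i, i ≤ m → Good (Q i)) ∧
      (∀ i, 1 ≤ i → i ≤ m → HasDimL (Q i ∩ Q (i - 1)) 1) := by
  induction h with
  | refl => exact ⟨0, fun _ => P, rfl, rfl, fun _ _ => hP, fun i h1 h2 => by omega⟩
  | @tail B C _ hBC ih =>
    obtain ⟨m, Q, h0, hm, hg, ha⟩ := ih
    refine ⟨m + 1, fun i => if i ≤ m then Q i else C, by simpa using h0, by simp, ?_, ?_⟩
    · intro i hi
      by_cases h : i ≤ m
      · simpa [h] using hg i h
      · simpa [h] using hBC.1
    · intro i h1 h2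
      by_cases h : i ≤ m
      · have h' : i - 1 ≤ m := by omega
        simp only [h, h', if_true]
        exact ha i h1 h
      · have : i = m + 1 := by omega
        subst this
        simpa [hm] using hBC.2

theorem stmt_13 [DivisionRing k] {n : ℕ} (hn : 3 ≤ n)
    (P P' : Set (Fin n → k))
    (hP : HasDimL P 2 ∧ HasDimR P 2) (hP' : HasDimL P' 2 ∧ HasDimR P' 2) :
    ∃ (m : ℕ) (Q : ℕ → Set (Fin n → k)), Q 0 = P ∧ Q m = P' ∧
      (∀ i, i ≤ m → HasDimL (Q i) 2 ∧ HasDimR (Q i) 2) ∧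
      (∀ i, 1 ≤ i → i ≤ m → HasDimL (Q i ∩ Q (i - 1)) 1 ∨ HasDimR (Q i ∩ Q (i - 1)) 1) := by
  obtain ⟨v, S, hS, rfl⟩ := good_elim P hP
  obtain ⟨w, T, hT, rfl⟩ := good_elim P' hP'
  obtain ⟨m, Q, h0, hm, hg, ha⟩ := chain_of_conn _ _ hP
    ((conn_trans v w S hS).trans (conn_dir w S T hS hT))
  exact ⟨m, Q, h0, hm, hg, fun i h1 h2 => Or.inl (ha i h1 h2)⟩
end

section
/- Let k be a division ring with no anti-automorphism, n ≥ 2, and f : k^n → k^n an injective map taking every left or right affine subspace to a left or right affine subspace. Then f takes every left affine subspace to a left affine subspace and every right affine subspace to a right affine subspace. -/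
open Function Set

variable {k : Type*}

open Function Set

namespace St19

/-- left (`true`) or right (`false`) multiplication on pairs -/
def sm {K : Type*} [DivisionRing K] (X : Bool) (c : K) (v : K × K) : K × K :=
  if X then (c * v.1, c * v.2) else (v.1 * c, v.2 * c)

section
variable {K : Type*} [DivisionRing K]

theorem sm_add (X : Bool) (c d : K) (v : K × K) : sm X (c + d) v = sm X c v + sm X d v := by
  cases X <;> simp [sm, add_mul, mul_add]
theorem sm_sub (X : Bool) (c d : K) (v : K × K) : sm X (c - d) v = sm X c v - sm X d v := by
  cases X <;> simp [sm, sub_mul, mul_sub]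
theorem sm_vadd (X : Bool) (c : K) (v w : K × K) : sm X c (v + w) = sm X c v + sm X c w := by
  cases X <;> simp [sm, add_mul, mul_add]
theorem sm_vsub (X : Bool) (c : K) (v w : K × K) : sm X c (v - w) = sm X c v - sm X c w := by
  cases X <;> simp [sm, sub_mul, mul_sub]
@[simp] theorem sm_one (X : Bool) (v : K × K) : sm X 1 v = v := by
  cases X <;> simp [sm]
@[simp] theorem sm_zero (X : Bool) (v : K × K) : sm X 0 v = 0 := by
  cases X <;> simp [sm]
@[simp] theorem sm_vzero (X : Bool) (c : K) : sm X c (0 : K × K) = 0 := by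
  cases X <;> simp [sm]
theorem sm_neg (X : Bool) (c : K) (v : K × K) : sm X (-c) v = - sm X c v := by
  cases X <;> simp [sm]
theorem sm_inv (X : Bool) {c : K} (hc : c ≠ 0) (v : K × K) : sm X c⁻¹ (sm X c v) = v := by
  cases X <;> simp [sm, hc]
theorem sm_inv' (X : Bool) {c : K} (hc : c ≠ 0) (v : K × K) : sm X c (sm X c⁻¹ v) = v := by
  cases X <;> simp [sm, hc]
theorem sm_comm (c d : K) (v : K × K) : sm true c (sm false d v) = sm false d (sm true c v) := by
  simp [sm, mul_assoc]
theorem sm_true_mul (c d : K) (v : K × K) : sm true (c * d) v = sm true c (sm true d v) := by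
  simp [sm, mul_assoc]
theorem sm_false_mul (c d : K) (v : K × K) : sm false (c * d) v = sm false d (sm false c v) := by
  simp [sm, mul_assoc]
theorem sm_mul_ex (X : Bool) (c d : K) (v : K × K) : ∃ e, sm X c (sm X d v) = sm X e v := by
  cases X
  · exact ⟨d * c, by simp [sm, mul_assoc]⟩
  · exact ⟨c * d, by simp [sm, mul_assoc]⟩
theorem sm_div_ex (X : Bool) (s : K) {r : K} (hr : r ≠ 0) (v : K × K) :
    ∃ t, sm X t (sm X r v) = sm X s v := by
  cases X
  · exact ⟨r⁻¹ * s, by simp [sm, mul_assoc, hr]⟩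
  · exact ⟨s * r⁻¹, by simp [sm, mul_assoc, hr]⟩
theorem sm_eq_zero (X : Bool) {c : K} {v : K × K} (h : sm X c v = 0) : c = 0 ∨ v = 0 := by
  by_cases hc : c = 0
  · exact Or.inl hc
  · right
    rw [← sm_inv X hc v, h]; simp
theorem sm_ne_zero (X : Bool) {c : K} {v : K × K} (hc : c ≠ 0) (hv : v ≠ 0) : sm X c v ≠ 0 :=
  fun h => (sm_eq_zero X h).elim hc hv
theorem sm_cancel (X : Bool) {c d : K} {v : K × K} (hv : v ≠ 0) (h : sm X c v = sm X d v) :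
    c = d := by
  have : sm X (c - d) v = 0 := by rw [sm_sub, h, sub_self]
  rcases sm_eq_zero X this with h | h
  · exact sub_eq_zero.mp h
  · exact absurd h hv

/-- left or right line -/
def ln (X : Bool) (a v : K × K) : Set (K × K) := {x | ∃ c, x = a + sm X c v}

theorem mem_ln_self (X : Bool) (a v : K × K) : a ∈ ln X a v := ⟨0, by simp⟩
theorem mem_ln_add (X : Bool) (a v : K × K) : a + v ∈ ln X a v := ⟨1, by simp⟩

theorem ln_eq {X : Bool} {a v p q : K × K} (hp : p ∈ ln X a v) (hq : q ∈ ln X a v) (hpq : p ≠ q) :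
    ln X a v = ln X p (q - p) := by
  obtain ⟨c, rfl⟩ := hp
  obtain ⟨d, rfl⟩ := hq
  have e : a + sm X d v - (a + sm X c v) = sm X (d - c) v := by rw [sm_sub]; abel
  have hdc : d - c ≠ 0 := by
    intro h; apply hpq; rw [sub_eq_zero.mp h]
  rw [e]
  ext x
  constructor
  · rintro ⟨s, rfl⟩
    obtain ⟨t, ht⟩ := sm_div_ex X (s - c) hdc v
    exact ⟨t, by rw [ht, sm_sub]; abel⟩
  · rintro ⟨s, rfl⟩
    obtain ⟨t, ht⟩ := sm_mul_ex X s (d - c) v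
    exact ⟨c + t, by rw [ht, sm_add]; abel⟩

theorem ln_smul (X : Bool) (a v : K × K) {c : K} (hc : c ≠ 0) : ln X a (sm X c v) = ln X a v := by
  by_cases hv : v = 0
  · simp [hv]
  · have := ln_eq (mem_ln_self X a v) (⟨c, rfl⟩ : a + sm X c v ∈ ln X a v)
      (by intro h; exact sm_ne_zero X hc hv (by simpa using h))
    rw [this]; simp

theorem ln_shift (X : Bool) (a v : K × K) : ln X (a + v) v = ln X a v := by
  by_cases hv : v = 0
  · simp [hv]
  · have := ln_eq (mem_ln_add X a v) (⟨1 + 1, rfl⟩ : a + sm X (1 + 1) v ∈ ln X a v)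
      (by intro h; rw [sm_add] at h; simp [hv] at h)
    rw [this, sm_add]; simp

/-- independence in dimension two -/
theorem span2 (X : Bool) {u w : K × K} (hu : u ≠ 0) (h : ∀ s, w ≠ sm X s u) (z : K × K) :
    ∃ α β, z = sm X α u + sm X β w := by
  obtain ⟨u1, u2⟩ := u
  obtain ⟨w1, w2⟩ := w
  obtain ⟨z1, z2⟩ := z
  cases X
  · by_cases h1 : u1 = 0
    · subst h1
      have h2 : u2 ≠ 0 := by rintro rfl; exact hu rfl
      have hw : w1 ≠ 0 := by
        rintro rfl
        exact h (u2⁻¹ * w2) (by simp [sm, h2])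
      refine ⟨u2⁻¹ * (z2 - w2 * (w1⁻¹ * z1)), w1⁻¹ * z1, ?_⟩
      simp [sm, hw, h2]
    · have ht : w2 - u2 * (u1⁻¹ * w1) ≠ 0 := by
        intro h0
        exact h (u1⁻¹ * w1) (by simp [sm, h1, ← sub_eq_zero.mp h0])
      set t := w2 - u2 * (u1⁻¹ * w1) with htd
      have hw2 : w2 = t + u2 * (u1⁻¹ * w1) := by rw [htd]; abel
      refine ⟨u1⁻¹ * (z1 - w1 * (t⁻¹ * (z2 - u2 * (u1⁻¹ * z1)))),
        t⁻¹ * (z2 - u2 * (u1⁻¹ * z1)), ?_⟩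
      generalize hy : t⁻¹ * (z2 - u2 * (u1⁻¹ * z1)) = y
      have hty : t * y = z2 - u2 * (u1⁻¹ * z1) := by rw [← hy]; simp [ht]
      rw [hw2]
      ext
      · simp [sm, h1]
      · simp only [sm, Bool.false_eq_true, if_false, Prod.snd_add, add_mul, hty, mul_sub, mul_assoc]
        abel
  · by_cases h1 : u1 = 0
    · subst h1
      have h2 : u2 ≠ 0 := by rintro rfl; exact hu rfl
      have hw : w1 ≠ 0 := by
        rintro rfl
        exact h (w2 * u2⁻¹) (by simp [sm, h2])
      refine ⟨(z2 - (z1 * w1⁻¹) * w2) * u2⁻¹, z1 * w1⁻¹, ?_⟩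
      simp [sm, hw, h2]
    · have ht : w2 - (w1 * u1⁻¹) * u2 ≠ 0 := by
        intro h0
        exact h (w1 * u1⁻¹) (by simp [sm, h1, ← sub_eq_zero.mp h0])
      set t := w2 - (w1 * u1⁻¹) * u2 with htd
      have hw2 : w2 = t + (w1 * u1⁻¹) * u2 := by rw [htd]; abel
      refine ⟨(z1 - ((z2 - (z1 * u1⁻¹) * u2) * t⁻¹) * w1) * u1⁻¹,
        (z2 - (z1 * u1⁻¹) * u2) * t⁻¹, ?_⟩
      generalize hy : (z2 - (z1 * u1⁻¹) * u2) * t⁻¹ = y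
      have hty : y * t = z2 - (z1 * u1⁻¹) * u2 := by rw [← hy]; simp [ht]
      rw [hw2]
      ext
      · simp [sm, h1]
      · simp only [sm, if_true, Prod.snd_add, mul_add, hty, sub_mul, mul_assoc]
        abel

/-- disjoint lines of the same side are parallel -/
theorem parallel {X : Bool} {p u q w : K × K} (hu : u ≠ 0) (h : Disjoint (ln X p u) (ln X q w)) :
    ∃ s, w = sm X s u := by
  by_contra hc
  push Not at hc
  obtain ⟨α, β, hz⟩ := span2 X hu hc (q - p)
  refine Set.disjoint_left.mp h (⟨α, rfl⟩ : p + sm X α u ∈ ln X p u) ⟨-β, ?_⟩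
  rw [sm_neg, ← sub_eq_add_neg, eq_sub_iff_add_eq, add_assoc, ← hz]; abel

/-- noncentral direction -/
def NC (v : K × K) : Prop := v.1 ≠ 0 ∧ ∃ c, c * (v.1⁻¹ * v.2) ≠ (v.1⁻¹ * v.2) * c

theorem NC.ne_zero {v : K × K} (h : NC v) : v ≠ 0 := by
  rintro rfl; exact h.1 rfl

theorem NC.left {v : K × K} (h : NC v) {c : K} (hc : c ≠ 0) : NC (sm true c v) := by
  refine ⟨by simp [sm, hc, h.1], ?_⟩
  simpa [sm, mul_assoc, hc] using h.2

theorem NC.right {v : K × K} (h : NC v) {c : K} (hc : c ≠ 0) : NC (sm false c v) := by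
  refine ⟨by simp [sm, hc, h.1], ?_⟩
  obtain ⟨x, hx⟩ := h.2
  refine ⟨c⁻¹ * x * c, fun h => hx ?_⟩
  simp only [sm, Bool.false_eq_true, if_false, mul_inv_rev, mul_assoc, mul_inv_cancel_left₀ hc] at h
  have h1 := mul_left_cancel₀ (inv_ne_zero hc) h
  have h2 : (x * (v.1⁻¹ * v.2)) * c = ((v.1⁻¹ * v.2) * x) * c := by simpa [mul_assoc] using h1
  exact mul_right_cancel₀ hc h2

theorem NC.ln_ne {v : K × K} (h : NC v) (a : K × K) (X : Bool) : ln X a v ≠ ln (!X) a v := by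
  have key : ln true a v ≠ ln false a v := by
    intro he
    obtain ⟨h1, c, hc⟩ := h
    have : a + sm true (v.1 * c * v.1⁻¹) v ∈ ln false a v := he ▸ ⟨_, rfl⟩
    obtain ⟨d, hd⟩ := this
    have hd := add_left_cancel hd
    simp only [sm, Bool.false_eq_true, if_false, if_true, Prod.mk.injEq] at hd
    obtain ⟨e1, e2⟩ := hd
    have : c = d := by simpa [mul_assoc, h1] using e1
    subst this
    apply hc
    have := congrArg (v.1⁻¹ * ·) e2
    simpa [mul_assoc, h1] using this
  cases X
  · exact key.symm
  · exact key

theorem ln_eq_of_not_NC {v : K × K} (h : ¬ NC v) (a : K × K) (X : Bool) :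
    ln X a v = ln (!X) a v := by
  have key : ln true a v = ln false a v := by
    obtain ⟨x, y⟩ := v
    by_cases hx : x = 0
    · subst hx
      by_cases hy : y = 0
      · subst hy; ext z; simp [ln, sm]
      · ext z
        constructor
        · rintro ⟨c, rfl⟩; exact ⟨y⁻¹ * c * y, by simp [sm, mul_assoc, hy]⟩
        · rintro ⟨c, rfl⟩; exact ⟨y * c * y⁻¹, by simp [sm, mul_assoc, hy]⟩
    · simp only [NC, not_and, not_exists, not_not] at h
      replace h := h hx
      have hy : y = x * (x⁻¹ * y) := by simp [hx]
      generalize x⁻¹ * y = m at h hy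
      subst hy
      ext z
      constructor
      · rintro ⟨c, rfl⟩; exact ⟨x⁻¹ * c * x, by rw [sm, sm]; simp [mul_assoc, hx, ← h]⟩
      · rintro ⟨c, rfl⟩; exact ⟨x * c * x⁻¹, by rw [sm, sm]; simp [mul_assoc, hx, ← h]⟩
  cases X
  · exact key.symm
  · exact key

theorem NC.exists_e {v : K × K} (h : NC v) :
    ∃ e, e ≠ 0 ∧ e + 1 ≠ 0 ∧ (∀ s, sm false e v ≠ sm true s v) ∧
      (∀ s, sm false (e + 1) v ≠ sm true s v) := by
  obtain ⟨h1, c, hc⟩ := h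
  have key : ∀ d, d * (v.1⁻¹ * v.2) ≠ (v.1⁻¹ * v.2) * d → ∀ s, sm false d v ≠ sm true s v := by
    intro d hd s he
    simp only [sm, Bool.false_eq_true, if_false, if_true, Prod.mk.injEq] at he
    obtain ⟨e1, e2⟩ := he
    have : s = v.1 * d * v.1⁻¹ := by rw [e1]; simp [mul_assoc, h1]
    subst this
    apply hd
    rw [mul_assoc, e2]; simp [mul_assoc, h1]
  refine ⟨c, ?_, ?_, key c hc, key (c + 1) ?_⟩
  · rintro rfl; simp at hc
  · intro h; rw [eq_neg_of_add_eq_zero_left h] at hc; simp at hc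
  · intro h; apply hc; simpa [add_mul, mul_add] using h

/-- additive generation by `c v d` -/
theorem NC.gen {v : K × K} (h : NC v) {T : K × K → Prop}
    (hT : ∀ c d, T (sm true c (sm false d v))) (hadd : ∀ x y, T x → T y → T (x + y)) (u : K × K) :
    T u := by
  obtain ⟨e, _, _, he, _⟩ := h.exists_e
  obtain ⟨α, β, rfl⟩ := span2 true h.ne_zero he u
  refine hadd _ _ ?_ (hT _ _)
  have := hT α 1
  simpa using this

end
end St19

open Function Set
namespace St19
section
variable {K : Type*} [DivisionRing K]

/-- hypotheses of the planar core -/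
structure Core (F : K × K → K × K) : Prop where
  inj : Function.Injective F
  zero : F 0 = 0
  hl : ∀ (Y : Bool) (a v : K × K), v ≠ 0 → ∃ X, F '' ln Y a v = ln X (F a) (F (a + v) - F a)

/-- type of a direction at a point -/
def Typ (F : K × K → K × K) (X : Bool) (a v : K × K) : Prop :=
  ∀ Y : Bool, F '' ln Y a v = ln (Y == X) (F a) (F (a + v) - F a)

theorem Core.ne {F : K × K → K × K} (h : Core F) {a v : K × K} (hv : v ≠ 0) :
    F a ≠ F (a + v) := by
  intro e; have := h.inj e; simp at this; exact hv this

theorem Core.typ {F : K × K → K × K} (h : Core F) (a : K × K) {v : K × K} (hv : NC v) :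
    NC (F (a + v) - F a) ∧ ∃ X, Typ F X a v := by
  obtain ⟨X, hX⟩ := h.hl true a v hv.ne_zero
  obtain ⟨Y, hY⟩ := h.hl false a v hv.ne_zero
  have hne : F '' ln true a v ≠ F '' ln false a v := fun e =>
    hv.ln_ne a true (h.inj.image_injective e)
  have hXY : Y = !X := by
    by_contra hc
    have : X = Y := by cases X <;> cases Y <;> simp_all
    subst this
    exact hne (hX.trans hY.symm)
  subst hXY
  constructor
  · by_contra hc
    exact hne (by rw [hX, hY]; exact ln_eq_of_not_NC hc _ _)
  · refine ⟨X, ?_⟩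
    intro Y
    cases Y <;> cases X <;> simpa using ‹_›

theorem Core.uniq {F : K × K → K × K} (h : Core F) {a v : K × K} (hv : NC v) {X Y : Bool}
    {p u : K × K} (he : F '' ln Y a v = ln (Y == X) p u) : Typ F X a v := by
  obtain ⟨hn, Z, hZ⟩ := h.typ a hv
  have e1 : ln (Y == X) p u = ln (Y == X) (F a) (F (a + v) - F a) :=
    ln_eq (he ▸ mem_image_of_mem _ (mem_ln_self _ _ _))
      (he ▸ mem_image_of_mem _ (mem_ln_add _ _ _)) (h.ne hv.ne_zero)
  by_cases hc : Z = X
  · exact hc ▸ hZ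
  · exfalso
    have h1 := hZ Y
    rw [he, e1] at h1
    have : (Y == Z) = !(Y == X) := by cases X <;> cases Y <;> cases Z <;> simp_all
    rw [this] at h1
    exact hn.ln_ne _ _ h1

theorem Core.trans {F : K × K → K × K} (h : Core F) {a v b w : K × K} (hw : NC w) {X : Bool}
    (ht : Typ F X a v) {Y : Bool} (he : ln Y a v = ln Y b w) : Typ F X b w :=
  h.uniq hw (Y := Y) (by rw [← he]; exact ht Y)

theorem Core.typ_left {F : K × K → K × K} (h : Core F) {a v : K × K} (hv : NC v) {X : Bool}
    (ht : Typ F X a v) {c : K} (hc : c ≠ 0) : Typ F X a (sm true c v) :=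
  h.trans (hv.left hc) ht (ln_smul true a v hc).symm

theorem Core.typ_right {F : K × K → K × K} (h : Core F) {a v : K × K} (hv : NC v) {X : Bool}
    (ht : Typ F X a v) {c : K} (hc : c ≠ 0) : Typ F X a (sm false c v) :=
  h.trans (hv.right hc) ht (ln_smul false a v hc).symm

theorem Core.typ_all {F : K × K → K × K} (h : Core F) {v : K × K} (hv : NC v) {X : Bool}
    {a : K × K} (ht : Typ F X a v) (b : K × K) : Typ F X b v := by
  suffices H : ∀ t, ∀ a, Typ F X a v → Typ F X (a + t) v by
    have := H (b - a) a ht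
    simpa using this
  intro t
  refine hv.gen (T := fun t => ∀ a, Typ F X a v → Typ F X (a + t) v) ?_ ?_ t
  · intro c d a ht
    by_cases hc : c = 0
    · simpa [hc] using ht
    by_cases hd : d = 0
    · simpa [hd] using ht
    have h1 := h.typ_left (hv.right hd) (h.typ_right hv ht hd) hc
    have hn := (hv.right hd).left hc
    have h2 := h.trans hn h1 (Y := true) (ln_shift true a _).symm
    have h3 := h.typ_left hn h2 (inv_ne_zero hc)
    rw [sm_inv _ hc] at h3
    have h4 := h.typ_right (hv.right hd) h3 (inv_ne_zero hd)
    rwa [sm_inv _ hd] at h4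
  · intro x y hx hy a ht
    rw [← add_assoc]
    exact hy _ (hx _ ht)

theorem Core.par {F : K × K → K × K} (h : Core F) {v : K × K} (hv : NC v) (a b : K × K) :
    F b + (F (a + v) - F a) ∈ F '' ln true b v := by
  obtain ⟨_, X, hX⟩ := h.typ a hv
  have ha := hX true
  have hb := h.typ_all hv hX b true
  by_cases hd : Disjoint (ln true a v) (ln true b v)
  · have hd' : Disjoint (F '' ln true b v) (F '' ln true a v) :=
      (Set.disjoint_image_iff h.inj).mpr hd.symm
    rw [ha, hb] at hd'
    obtain ⟨s, hs⟩ := parallel (sub_ne_zero.mpr (h.ne hv.ne_zero).symm) hd'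
    rw [hb, hs]
    exact ⟨s, rfl⟩
  · obtain ⟨z, ⟨c, rfl⟩, d, hz⟩ := Set.not_disjoint_iff.mp hd
    have hba : b ∈ ln true a v := ⟨c - d, by
      rw [sm_sub, ← add_sub_assoc, hz]; abel⟩
    have hba' : b + v ∈ ln true a v := by
      obtain ⟨e, rfl⟩ := hba
      exact ⟨e + 1, by rw [sm_add]; simp [add_assoc]⟩
    have e := ln_eq hba hba' (by simpa using hv.ne_zero)
    rw [add_sub_cancel_left] at e
    rw [← e, ha]
    have : F b ∈ F '' ln true a v := mem_image_of_mem _ hba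
    rw [ha] at this
    obtain ⟨t, ht⟩ := this
    exact ⟨t + 1, by rw [ht, sm_add]; simp [add_assoc]⟩

theorem Core.add1 {F : K × K → K × K} (h : Core F) {v w : K × K} (hv : NC v) (hw : NC w)
    (hi : ∀ s, w ≠ sm true s v) (a : K × K) :
    F (a + w + v) - F (a + w) = F (a + v) - F a := by
  have h1 := h.par hv a (a + w)
  have h2 := h.par hw a (a + v)
  have e : F (a + v) + (F (a + w) - F a) = F (a + w) + (F (a + v) - F a) := by abel
  rw [e] at h2
  obtain ⟨x, ⟨c, hx⟩, hFx⟩ := h1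
  obtain ⟨y, ⟨d, hy⟩, hFy⟩ := h2
  have hxy : x = y := h.inj (hFx.trans hFy.symm)
  subst hxy
  have hd : d = 1 := by
    by_contra hd
    have e2 : sm true (1 - d) w = sm true (1 - c) v := by
      rw [hx] at hy
      rw [sm_sub, sm_sub, sm_one, sm_one, sub_eq_sub_iff_add_eq_add]
      have := congrArg (· - a) hy
      simp only [add_sub_right_comm, sub_self, zero_add] at this
      exact this
    have hd' : (1 - d) ≠ 0 := sub_ne_zero.mpr (Ne.symm hd)
    have := congrArg (sm true (1 - d)⁻¹) e2
    rw [sm_inv _ hd'] at this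
    obtain ⟨s, hs⟩ := sm_mul_ex true (1 - d)⁻¹ (1 - c) v
    exact hi s (this.trans hs)
  rw [hd, sm_one] at hy
  have : a + w + v = x := by rw [hy]; abel
  rw [this, hFx]; abel

theorem Core.add2 {F : K × K → K × K} (h : Core F) {v : K × K} (hv : NC v) (a : K × K) :
    F (a + v) = F a + F v := by
  suffices H : ∀ t, ∀ a, F (a + t + v) - F (a + t) = F (a + v) - F a by
    have := H a 0
    simp only [zero_add, h.zero, sub_zero] at this
    rw [← this]; abel
  intro t
  obtain ⟨e, he0, he1, he, he'⟩ := hv.exists_e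
  let T : K × K → Prop := fun t => ∀ a, F (a + t + v) - F (a + t) = F (a + v) - F a
  have hadd : ∀ x y, T x → T y → T (x + y) := by
    intro x y hx hy a
    rw [← add_assoc, hy, hx]
  have key : ∀ e, e ≠ 0 → (∀ s, sm false e v ≠ sm true s v) → ∀ c, T (sm true c (sm false e v)) := by
    intro e he0 he c
    by_cases hc : c = 0
    · subst hc; intro a; simp
    · intro a
      refine h.add1 hv ((hv.right he0).left hc) ?_ a
      intro s hs
      have := congrArg (sm true c⁻¹) hs
      rw [sm_inv _ hc] at this
      obtain ⟨t, ht⟩ := sm_mul_ex true c⁻¹ s v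
      exact he t (this.trans ht)
  obtain ⟨α, β, rfl⟩ := span2 true hv.ne_zero he t
  refine hadd _ _ ?_ (key e he0 he _)
  have e1 : sm true α v = sm true α (sm false (e + 1) v) + sm true (-α) (sm false e v) := by
    rw [sm_add, sm_one, sm_vadd, sm_neg]; abel
  rw [e1]
  exact hadd _ _ (key _ he1 he' _) (key _ he0 he _)

theorem Core.add {F : K × K → K × K} (h : Core F) (hK : ∃ v : K × K, NC v) (a b : K × K) :
    F (a + b) = F a + F b := by
  obtain ⟨v, hv⟩ := hK
  refine hv.gen (T := fun b => ∀ a, F (a + b) = F a + F b) ?_ ?_ b a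
  · intro c d a
    by_cases hc : c = 0
    · simp [hc, h.zero]
    by_cases hd : d = 0
    · simp [hd, h.zero]
    exact h.add2 ((hv.right hd).left hc) a
  · intro x y hx hy a
    rw [← add_assoc, hy, hx, hy, add_assoc]

end
end St19

open Function Set
namespace St19
section
variable {K : Type*} [DivisionRing K]

theorem Core.mem {F : K × K → K × K} (h : Core F) {v : K × K} {X : Bool}
    (ht : Typ F X 0 v) (Y : Bool) (c : K) : ∃ s, F (sm Y c v) = sm (Y == X) s (F v) := by
  have h1 := ht Y
  rw [h.zero, zero_add, sub_zero] at h1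
  have : F (sm Y c v) ∈ F '' ln Y 0 v := mem_image_of_mem _ ⟨c, by simp⟩
  rw [h1] at this
  obtain ⟨s, hs⟩ := this
  exact ⟨s, by simpa using hs⟩

theorem Core.surj {F : K × K → K × K} (h : Core F) {v : K × K} {X : Bool}
    (ht : Typ F X 0 v) (Y : Bool) (s : K) : ∃ c, sm (Y == X) s (F v) = F (sm Y c v) := by
  have h1 := ht Y
  rw [h.zero, zero_add, sub_zero] at h1
  have : sm (Y == X) s (F v) ∈ F '' ln Y 0 v := h1 ▸ ⟨s, by simp⟩
  obtain ⟨x, ⟨c, rfl⟩, hx⟩ := this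
  exact ⟨c, by simpa using hx.symm⟩

theorem Core.Fne {F : K × K → K × K} (h : Core F) {v : K × K} (hv : v ≠ 0) : F v ≠ 0 := by
  intro e; exact hv (h.inj (e.trans h.zero.symm))

theorem Core.transfer {F : K × K → K × K} (h : Core F) (hK : ∃ v : K × K, NC v) {X : Bool}
    {u w : K × K} (hu : Typ F X 0 u) (hw : Typ F X 0 w) (huw : Typ F X 0 (u + w))
    (hu0 : u ≠ 0)
    (hi : ∀ s, w ≠ sm true s u) {c s : K} (hc : F (sm true c u) = sm X s (F u)) :
    F (sm true c w) = sm X s (F w) := by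
  obtain ⟨t, ht⟩ := h.mem hw true c
  obtain ⟨r, hr⟩ := h.mem huw true c
  have hX : (true == X) = X := by cases X <;> rfl
  rw [hX] at ht hr
  rw [sm_vadd, h.add hK, h.add hK, sm_vadd, hc, ht] at hr
  have e : sm X (t - r) (F w) = sm X (r - s) (F u) := by
    rw [sm_sub, sm_sub, sub_eq_sub_iff_add_eq_add, add_comm, hr, add_comm]
  have htr : t - r = 0 := by
    by_contra hne
    obtain ⟨q, hq⟩ := sm_mul_ex X (t - r)⁻¹ (r - s) (F u)
    have e2 := congrArg (sm X (t - r)⁻¹) e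
    rw [sm_inv _ hne, hq] at e2
    obtain ⟨c', hc'⟩ := h.surj hu true q
    rw [hX] at hc'
    exact hi c' (h.inj (e2.trans hc'))
  rw [htr, sm_zero] at e
  have hrs : r - s = 0 := (sm_eq_zero X e.symm).resolve_right (h.Fne hu0)
  rw [ht, sub_eq_zero.mp htr, sub_eq_zero.mp hrs]

theorem Core.right_inv {F : K × K → K × K} (h : Core F) {X : Bool}
    {v : K × K} (hv : NC v) (ht : Typ F X 0 v) {c s : K} (hc : F (sm true c v) = sm X s (F v))
    (d : K) : F (sm true c (sm false d v)) = sm X s (F (sm false d v)) := by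
  have hK : ∃ v : K × K, NC v := ⟨v, hv⟩
  have key : ∀ d, d ≠ 0 → d + 1 ≠ 0 → (∀ s, sm false d v ≠ sm true s v) →
      F (sm true c (sm false d v)) = sm X s (F (sm false d v)) := by
    intro d hd hd1 hi
    refine h.transfer hK ht (h.typ_right hv ht hd) ?_ hv.ne_zero hi hc
    have := h.typ_right hv ht hd1
    rwa [sm_add, sm_one, add_comm] at this
  by_cases hi : ∀ s, sm false d v ≠ sm true s v
  · refine key d ?_ ?_ hi
    · rintro rfl; exact hi 0 (by simp)
    · intro h0
      refine hi (-1) ?_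
      rw [eq_neg_of_add_eq_zero_left h0, sm_neg, sm_neg, sm_one, sm_one]
  · push Not at hi
    obtain ⟨q, hq⟩ := hi
    obtain ⟨e, he0, he1, he, he'⟩ := hv.exists_e
    have hde : ∀ s, sm false (d + e) v ≠ sm true s v := by
      intro s hs
      apply he (s - q)
      rw [sm_sub, ← hs, ← hq, sm_add]; abel
    have hd : sm false d v = sm false (d + e) v - sm false e v := by rw [sm_add]; abel
    have a1 := key e he0 he1 he
    have a2 := key (d + e) (by intro h0; exact hde 0 (by simp [h0]))
      (by
        intro h0
        refine hde (-1) ?_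
        rw [eq_neg_of_add_eq_zero_left h0, sm_neg, sm_neg, sm_one, sm_one]) hde
    have hsub : ∀ x y, F (x - y) = F x - F y := by
      intro x y
      have := h.add hK (x - y) y
      rw [sub_add_cancel] at this
      rw [this]; abel
    rw [hd, sm_vsub, hsub, hsub, sm_vsub, a1, a2]

theorem Core.no_S {F : K × K → K × K} (h : Core F)
    (hanti : ¬ ∃ α : K → K, Function.Bijective α ∧
      (∀ a b : K, α (a + b) = α a + α b) ∧ (∀ a b : K, α (a * b) = α b * α a))
    {v : K × K} (hv : NC v) (ht : Typ F false 0 v) : False := by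
  wlog h1 : v.1 = 1 generalizing v
  · exact this (hv.left (inv_ne_zero hv.1)) (h.typ_left hv ht (inv_ne_zero hv.1))
      (by simp [sm, hv.1])
  apply hanti
  have hK : ∃ v : K × K, NC v := ⟨v, hv⟩
  have hsub : ∀ x y, F (x - y) = F x - F y := by
    intro x y
    have := h.add hK (x - y) y
    rw [sub_add_cancel] at this
    rw [this]; abel
  have hU : NC (F v) := by
    have := (h.typ 0 hv).1
    simpa [h.zero] using this
  have hU0 := hU.ne_zero
  choose σ hσ using fun c => h.mem ht true c
  choose τ hτ using fun c => h.mem ht false c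
  have hσs : ∀ s, ∃ c, σ c = s := by
    intro s
    obtain ⟨c, hc⟩ := h.surj ht true s
    exact ⟨c, sm_cancel _ hU0 ((hσ c).symm.trans hc.symm)⟩
  have hτs : ∀ s, ∃ c, τ c = s := by
    intro s
    obtain ⟨c, hc⟩ := h.surj ht false s
    exact ⟨c, sm_cancel _ hU0 ((hτ c).symm.trans hc.symm)⟩
  have hσi : Function.Injective σ := by
    intro c d e
    refine sm_cancel true hv.ne_zero (h.inj ?_)
    rw [hσ, hσ, e]
  have hτi : Function.Injective τ := by
    intro c d e
    refine sm_cancel false hv.ne_zero (h.inj ?_)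
    rw [hτ, hτ, e]
  have hσa : ∀ a b, σ (a + b) = σ a + σ b := by
    intro a b
    refine sm_cancel (true == false) hU0 ?_
    rw [← hσ, sm_add, h.add hK, hσ, hσ, sm_add]
  have hτa : ∀ a b, τ (a + b) = τ a + τ b := by
    intro a b
    refine sm_cancel (false == false) hU0 ?_
    rw [← hτ, sm_add, h.add hK, hτ, hτ, sm_add]
  have hσ1 : σ 1 = 1 := sm_cancel (true == false) hU0 (by rw [← hσ]; simp)
  have hτ1 : τ 1 = 1 := sm_cancel (false == false) hU0 (by rw [← hτ]; simp)
  have hF : ∀ c d, F (sm true c (sm false d v)) = sm false (σ c) (sm true (τ d) (F v)) := by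
    intro c d
    rw [h.right_inv hv ht (hσ c) d, hτ]; rfl
  obtain ⟨v1, m⟩ := v
  obtain rfl : v1 = 1 := h1
  obtain ⟨α, β, hUe⟩ : ∃ α β, F (1, m) = (α, β) := ⟨_, _, rfl⟩
  rw [hUe] at hF hU
  have hα : α ≠ 0 := hU.1
  obtain ⟨μ, rfl⟩ : ∃ μ, β = μ * α := ⟨β * α⁻¹, by simp [hα]⟩
  have hμ : ¬ ∀ x, x * μ = μ * x := by
    intro hc
    obtain ⟨_, c, hcc⟩ := hU
    apply hcc
    simp only
    rw [← hc α, inv_mul_cancel_left₀ hα]; exact hc c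
  -- image of the vertical axis
  have hax : ∀ c d, F (0, c * (m * d - d * m)) =
      (τ d * (α * σ c) - α * σ (c * d), τ d * (μ * (α * σ c)) - μ * (α * σ (c * d))) := by
    intro c d
    have e1 : ((0 : K), c * (m * d - d * m)) =
        sm true c (sm false d (1, m)) - sm true (c * d) (sm false 1 (1, m)) := by
      simp [sm, mul_sub, mul_assoc]
    rw [e1, hsub, hF, hF, hτ1]
    simp [sm, mul_assoc]
  obtain ⟨X, hX⟩ := h.hl true 0 (0, 1) (by simp)
  rw [h.zero, zero_add, sub_zero] at hX
  have hax' : ∀ y, F (0, y) ∈ ln X 0 (F (0, 1)) := by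
    intro y
    rw [← hX]
    exact mem_image_of_mem _ ⟨y, by simp [sm]⟩
  generalize F (0, 1) = δ at hax'
  obtain ⟨δ1, δ2⟩ := δ
  by_cases hδ : δ1 = 0
  · subst hδ
    have hz : ∀ c d, τ d * (α * σ c) = α * σ (c * d) := by
      intro c d
      obtain ⟨t, ht⟩ := hax' (c * (m * d - d * m))
      rw [hax] at ht
      have := congrArg Prod.fst ht
      rw [← sub_eq_zero]
      cases X <;> simpa [sm] using this
    have hz1 : ∀ d, α * σ d = τ d * α := by
      intro d
      have := hz 1 d
      rw [hσ1, one_mul, mul_one] at this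
      exact this.symm
    refine ⟨τ, ⟨hτi, hτs⟩, hτa, ?_⟩
    intro a b
    apply mul_right_cancel₀ hα
    rw [← hz1, ← hz, hz1, mul_assoc]
  · cases X
    · -- right line
      obtain ⟨ρ, rfl⟩ : ∃ ρ, δ2 = ρ * δ1 := ⟨δ2 * δ1⁻¹, by simp [hδ]⟩
      have hz : ∀ c d, ρ * (τ d * (α * σ c) - α * σ (c * d)) =
          τ d * (μ * (α * σ c)) - μ * (α * σ (c * d)) := by
        intro c d
        obtain ⟨t, ht⟩ := hax' (c * (m * d - d * m))
        rw [hax] at ht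
        simp only [sm, Bool.false_eq_true, if_false, zero_add, Prod.mk.injEq] at ht
        rw [ht.1, ht.2, mul_assoc]
      have hz' : ∀ c d, (ρ * τ d - τ d * μ) * (α * σ c) = (ρ - μ) * (α * σ (c * d)) := by
        intro c d
        have := hz c d
        rw [mul_sub, sub_eq_sub_iff_add_eq_add, ← sub_eq_sub_iff_add_eq_add] at this
        rw [sub_mul, sub_mul, mul_assoc, mul_assoc]
        rw [sub_eq_sub_iff_add_eq_add] at this ⊢
        rw [add_comm (ρ * (α * σ (c * d)))]
        exact this
      have hz1 : ∀ d, (ρ * τ d - τ d * μ) * α = (ρ - μ) * (α * σ d) := by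
        intro d
        have := hz' 1 d
        rwa [hσ1, one_mul, mul_one] at this
      have hρ : ρ - μ ≠ 0 := by
        intro h0
        apply hμ
        intro x
        obtain ⟨d, rfl⟩ := hτs x
        have := hz1 d
        rw [h0, zero_mul] at this
        have := (mul_eq_zero.mp this).resolve_right hα
        rw [sub_eq_zero.mp h0] at this
        exact (sub_eq_zero.mp this).symm
      refine ⟨σ, ⟨hσi, hσs⟩, hσa, ?_⟩
      intro a b
      apply mul_left_cancel₀ hα
      apply mul_left_cancel₀ hρ
      rw [← hz', ← mul_assoc, hz1]
      simp [mul_assoc]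
    · obtain ⟨ρ, rfl⟩ : ∃ ρ, δ2 = δ1 * ρ := ⟨δ1⁻¹ * δ2, by simp [hδ]⟩
      have hz : ∀ c d, (τ d * (α * σ c) - α * σ (c * d)) * ρ =
          τ d * (μ * (α * σ c)) - μ * (α * σ (c * d)) := by
        intro c d
        obtain ⟨t, ht⟩ := hax' (c * (m * d - d * m))
        rw [hax] at ht
        simp only [sm, if_true, zero_add, Prod.mk.injEq] at ht
        rw [ht.1, ht.2, mul_assoc]
      obtain ⟨θ, hθ⟩ : ∃ θ : K → K, ∀ c, θ c = (α * σ c) * ρ - μ * (α * σ c) := ⟨_, fun _ => rfl⟩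
      have hz' : ∀ c d, τ d * θ c = θ (c * d) := by
        intro c d
        rw [hθ, hθ]
        have := hz c d
        rw [sub_mul] at this
        rw [mul_sub]
        rw [sub_eq_sub_iff_add_eq_add] at this ⊢
        rw [← mul_assoc (τ d) _ ρ, this]; abel
      have hz1 : ∀ d, θ d = τ d * θ 1 := by
        intro d; rw [hz', one_mul]
      have hθ1 : θ 1 ≠ 0 := by
        intro h0
        have hall : ∀ x, x * ρ = μ * x := by
          intro x
          obtain ⟨c, hc⟩ := hσs (α⁻¹ * x)
          have h2 := hz1 c
          rw [h0, mul_zero, hθ, hc, mul_inv_cancel_left₀ hα] at h2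
          exact sub_eq_zero.mp h2
        have h3 := hall 1
        rw [one_mul, mul_one] at h3
        subst h3
        exact hμ hall
      refine ⟨τ, ⟨hτi, hτs⟩, hτa, ?_⟩
      intro a b
      apply mul_right_cancel₀ hθ1
      rw [← hz1, ← hz', hz1 a, mul_assoc]

/-- left half of the conclusion of the planar core -/
theorem Core.left {F : K × K → K × K} (h : Core F) (hK : ∃ v : K × K, NC v)
    (hanti : ¬ ∃ α : K → K, Function.Bijective α ∧
      (∀ a b : K, α (a + b) = α a + α b) ∧ (∀ a b : K, α (a * b) = α b * α a)) :
    (∀ u, NC u → NC (F u) ∧ Typ F true 0 u) ∧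
    ∃ σ : K → K, ∀ c u, F (sm true c u) = sm true (σ c) (F u) := by
  have hP : ∀ u, NC u → NC (F u) ∧ Typ F true 0 u := by
    intro u hu
    obtain ⟨h1, X, hX⟩ := h.typ 0 hu
    refine ⟨by simpa [h.zero] using h1, ?_⟩
    cases X
    · exact (h.no_S hanti hu hX).elim
    · exact hX
  refine ⟨hP, ?_⟩
  obtain ⟨v, hv⟩ := hK
  obtain ⟨m, hvm⟩ : ∃ m, NC ((1 : K), m) := by
    refine ⟨v.1⁻¹ * v.2, ?_⟩
    have := hv.left (inv_ne_zero hv.1)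
    simpa [sm, hv.1] using this
  have hvm' : NC ((1 : K), m - 1) := by
    obtain ⟨_, c, hc⟩ := hvm
    refine ⟨one_ne_zero, c, fun h => hc ?_⟩
    simpa [mul_sub, sub_mul] using h
  obtain ⟨c0, hc0⟩ : ∃ c, c * m ≠ m * c := by
    obtain ⟨_, c, hc⟩ := hvm
    exact ⟨c, by simpa using hc⟩
  -- choose d
  obtain ⟨d, hd, hd2⟩ : ∃ d, d * m ≠ m * d ∧ m * d ≠ d * (m - 1) := by
    by_cases hh : m * c0 = c0 * (m - 1)
    · refine ⟨c0 + 1, fun h => hc0 (by simpa [add_mul, mul_add] using h), fun h => ?_⟩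
      rw [mul_add, hh, add_mul] at h
      simp only [mul_one, one_mul, add_right_inj] at h
      exact one_ne_zero (sub_eq_self.mp h.symm)
    · exact ⟨c0, hc0, hh⟩
  have hd0 : d ≠ 0 := by rintro rfl; simp at hd
  have hd1 : d + 1 ≠ 0 := by
    intro h; rw [eq_neg_of_add_eq_zero_left h] at hd; simp at hd
  have hsum : NC (sm false d ((1 : K), m) + (1, m - 1)) := by
    by_contra hc
    simp only [sm, Bool.false_eq_true, if_false, one_mul, Prod.mk_add_mk, NC, not_and, not_exists,
      not_not] at hc
    have hc := hc hd1
    set z := (d + 1)⁻¹ * (m * d + (m - 1)) with hz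
    have e1 : m * d + (m - 1) = (d + 1) * z := by rw [hz]; simp [hd1]
    have e2 : (m - z) * (d + 1) = 1 := by
      rw [sub_mul, ← hc, ← e1, mul_add, mul_one]; abel
    have e3 : d + 1 = (m - z)⁻¹ := eq_inv_of_mul_eq_one_right e2
    have e4 : Commute (m - z) m := by
      have : Commute z m := (hc m).symm
      exact (Commute.refl m).sub_left this
    have e5 : Commute (d + 1) m := by rw [e3]; exact e4.inv_left₀
    apply hd
    have := e5.eq
    simpa [add_mul, mul_add] using this
  choose σ hσ using fun c => h.mem (hP _ hvm).2 true c
  have hK : ∃ v : K × K, NC v := ⟨v, hv⟩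
  have g1 : ∀ c d, F (sm true c (sm false d (1, m))) = sm true (σ c) (F (sm false d (1, m))) :=
    fun c d => h.right_inv hvm (hP _ hvm).2 (hσ c) d
  have g2 : ∀ c, F (sm true c (1, m - 1)) = sm true (σ c) (F (1, m - 1)) := by
    intro c
    refine h.transfer hK (hP _ (hvm.right hd0)).2 (hP _ hvm').2 (hP _ hsum).2
      (hvm.right hd0).ne_zero ?_ (g1 c d)
    intro s hs
    simp only [sm, Bool.false_eq_true, if_false, if_true, one_mul, Prod.mk.injEq] at hs
    apply hd2
    have : s = d⁻¹ := eq_inv_of_mul_eq_one_left hs.1.symm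
    rw [hs.2, this]; simp [hd0]
  have g3 : ∀ c d, F (sm true c (sm false d (1, m - 1))) =
      sm true (σ c) (F (sm false d (1, m - 1))) :=
    fun c d => h.right_inv hvm' (hP _ hvm').2 (g2 c) d
  have hsub : ∀ x y, F (x - y) = F x - F y := by
    intro x y
    have := h.add hK (x - y) y
    rw [sub_add_cancel] at this
    rw [this]; abel
  refine ⟨σ, fun c u => ?_⟩
  have g4 : ∀ y, F (sm true c (0, y)) = sm true (σ c) (F (0, y)) := by
    intro y
    have : ((0 : K), y) = sm false y (1, m) - sm false y (1, m - 1) := by simp [sm, sub_mul]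
    rw [this, sm_vsub, hsub, hsub, sm_vsub, g1, g3]
  have : u = sm false u.1 (1, m) + (0, u.2 - m * u.1) := by ext <;> simp [sm]
  rw [this, sm_vadd, h.add hK, h.add hK, sm_vadd, g1, g4]

end
end St19

open Function Set
namespace St19
section
variable {K : Type*} [DivisionRing K]

theorem NC_iff (v : K × K) : NC v ↔ ln true 0 v ≠ ln false 0 v := by
  constructor
  · intro h; exact h.ln_ne 0 true
  · intro h; by_contra hc; exact h (ln_eq_of_not_NC hc 0 true)

/-- passage to the opposite ring -/
def tt (v : K × K) : Kᵐᵒᵖ × Kᵐᵒᵖ := (MulOpposite.op v.1, MulOpposite.op v.2)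
/-- and back -/
def ti (v : Kᵐᵒᵖ × Kᵐᵒᵖ) : K × K := (v.1.unop, v.2.unop)

@[simp] theorem ti_tt (v : K × K) : ti (tt v) = v := rfl
@[simp] theorem tt_ti (v : Kᵐᵒᵖ × Kᵐᵒᵖ) : tt (ti v) = v := rfl
theorem tt_inj : Function.Injective (tt : K × K → _) := fun _ _ h => congrArg ti h
theorem tt_sm (X : Bool) (c : K) (v : K × K) :
    tt (sm X c v) = sm (!X) (MulOpposite.op c) (tt v) := by
  cases X <;> simp [sm, tt]
theorem tt_ln (X : Bool) (a v : K × K) : tt '' ln X a v = ln (!X) (tt a) (tt v) := by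
  ext z
  constructor
  · rintro ⟨_, ⟨c, rfl⟩, rfl⟩
    exact ⟨MulOpposite.op c, by rw [← tt_sm]; rfl⟩
  · rintro ⟨c, rfl⟩
    refine ⟨_, ⟨c.unop, rfl⟩, ?_⟩
    have : c = MulOpposite.op c.unop := rfl
    conv_rhs => rw [this, ← tt_sm]
    rfl

theorem Core.opp {F : K × K → K × K} (h : Core F) : Core (fun x => tt (F (ti x))) where
  inj x y e := by
    have := congrArg tt (h.inj (tt_inj e))
    simpa using this
  zero := by
    have : ti (0 : Kᵐᵒᵖ × Kᵐᵒᵖ) = (0 : K × K) := rfl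
    simp only [this, h.zero]; rfl
  hl Y a v hv := by
    obtain ⟨X, hX⟩ := h.hl (!Y) (ti a) (ti v) (fun e => hv (congrArg tt e))
    refine ⟨!X, ?_⟩
    have e1 : ln Y a v = tt '' ln (!Y) (ti a) (ti v) := by rw [tt_ln]; simp
    have e2 := congrArg (fun s => tt '' s) hX
    simp only [tt_ln] at e2
    rw [e1, image_image]
    simp only [ti_tt]
    rw [← image_image tt F, e2]
    rfl

/-- the planar core -/
theorem Core.main {F : K × K → K × K} (h : Core F) (hK : ∃ v : K × K, NC v)
    (hanti : ¬ ∃ α : K → K, Function.Bijective α ∧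
      (∀ a b : K, α (a + b) = α a + α b) ∧ (∀ a b : K, α (a * b) = α b * α a)) (Y : Bool) :
    ∃ σ : K → K, ∀ c u, F (sm Y c u) = sm Y (σ c) (F u) := by
  cases Y
  · have hK' : ∃ v : Kᵐᵒᵖ × Kᵐᵒᵖ, NC v := by
      obtain ⟨v, hv⟩ := hK
      refine ⟨tt v, ?_⟩
      rw [NC_iff] at hv ⊢
      intro e
      have z : (0 : Kᵐᵒᵖ × Kᵐᵒᵖ) = tt (0 : K × K) := rfl
      rw [z] at e
      have e1 := tt_ln false 0 v
      have e2 := tt_ln true 0 v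
      simp only [Bool.not_true, Bool.not_false] at e1 e2
      rw [← e1, ← e2] at e
      exact hv (tt_inj.image_injective e).symm
    have hanti' : ¬ ∃ α : Kᵐᵒᵖ → Kᵐᵒᵖ, Function.Bijective α ∧
      (∀ a b : Kᵐᵒᵖ, α (a + b) = α a + α b) ∧ (∀ a b : Kᵐᵒᵖ, α (a * b) = α b * α a) := by
      rintro ⟨α, hb, ha, hm⟩
      refine hanti ⟨fun x => (α (MulOpposite.op x)).unop, ?_, ?_, ?_⟩
      · exact (MulOpposite.unop_bijective.comp hb).comp MulOpposite.op_bijective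
      · intro a b; simp [ha]
      · intro a b; simp [hm]
    obtain ⟨σ, hσ⟩ := (h.opp.left hK' hanti').2
    refine ⟨fun c => (σ (MulOpposite.op c)).unop, fun c u => ?_⟩
    have := hσ (MulOpposite.op c) (tt u)
    have e := tt_sm false c u
    simp only [Bool.not_false] at e
    rw [← e, ti_tt, ti_tt] at this
    have e3 : sm true (σ (MulOpposite.op c)) (tt (F u)) =
      tt (sm false ((σ (MulOpposite.op c)).unop) (F u)) := by rw [tt_sm]; rfl
    rw [e3] at this
    exact tt_inj this
  · exact (h.left hK hanti).2

/-- left or right multiplication on `K^n` -/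
def vs {n : ℕ} (X : Bool) (c : K) (v : Fin n → K) : Fin n → K :=
  fun i => if X then c * v i else v i * c

/-- lines in `K^n` -/
def vln {n : ℕ} (X : Bool) (a v : Fin n → K) : Set (Fin n → K) := {x | ∃ c, x = a + vs X c v}

theorem vs_vadd {n : ℕ} (X : Bool) (c : K) (v w : Fin n → K) :
    vs X c (v + w) = vs X c v + vs X c w := by
  cases X <;> ext i <;> simp [vs, add_mul, mul_add]

/-- coordinate projection -/
def pr {n : ℕ} (i j : Fin n) (x : Fin n → K) : K × K := (x i, x j)

theorem pr_add {n : ℕ} (i j : Fin n) (x y : Fin n → K) : pr i j (x + y) = pr i j x + pr i j y := rfl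
theorem pr_sub {n : ℕ} (i j : Fin n) (x y : Fin n → K) : pr i j (x - y) = pr i j x - pr i j y := rfl
theorem pr_vs {n : ℕ} (i j : Fin n) (X : Bool) (c : K) (x : Fin n → K) :
    pr i j (vs X c x) = sm X c (pr i j x) := by
  cases X <;> simp [pr, vs, sm]
theorem pr_vln {n : ℕ} (i j : Fin n) (X : Bool) (a v : Fin n → K) :
    pr i j '' vln X a v = ln X (pr i j a) (pr i j v) := by
  ext z
  constructor
  · rintro ⟨_, ⟨c, rfl⟩, rfl⟩
    exact ⟨c, by rw [pr_add, pr_vs]⟩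
  · rintro ⟨c, rfl⟩
    exact ⟨_, ⟨c, rfl⟩, by rw [pr_add, pr_vs]⟩

theorem lift {n : ℕ} (g : K × K → Fin n → K) (hK : ∃ v : K × K, NC v)
    (hanti : ¬ ∃ α : K → K, Function.Bijective α ∧
      (∀ a b : K, α (a + b) = α a + α b) ∧ (∀ a b : K, α (a * b) = α b * α a))
    (hinj : Function.Injective g) (h0 : g 0 = 0) (B : AddSubgroup (Fin n → K))
    (hB : ∀ x, g x ∈ B) (i j : Fin n) (hp : ∀ x ∈ B, pr i j x = 0 → x = 0)
    (hl : ∀ (Y : Bool) (a v : K × K), v ≠ 0 →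
      ∃ X, g '' ln Y a v = vln X (g a) (g (a + v) - g a)) :
    (∀ x y, g (x + y) = g x + g y) ∧
    ∀ Y, ∃ σ : K → K, Function.Surjective σ ∧ ∀ c u, g (sm Y c u) = vs Y (σ c) (g u) := by
  have hC : Core (fun x => pr i j (g x)) := by
    refine ⟨?_, ?_, ?_⟩
    · intro x y e
      apply hinj
      rw [← sub_eq_zero]
      refine hp _ (B.sub_mem (hB x) (hB y)) ?_
      rw [pr_sub]; exact sub_eq_zero.mpr e
    · simp only [h0]; rfl
    · intro Y a v hv
      obtain ⟨X, hX⟩ := hl Y a v hv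
      refine ⟨X, ?_⟩
      rw [← image_image (pr i j) g, hX, pr_vln, pr_sub]
  have hadd : ∀ x y, g (x + y) = g x + g y := by
    intro x y
    rw [← sub_eq_zero]
    refine hp _ (B.sub_mem (hB _) (B.add_mem (hB x) (hB y))) ?_
    rw [pr_sub, pr_add, sub_eq_zero]
    exact hC.add hK x y
  refine ⟨hadd, fun Y => ?_⟩
  obtain ⟨σ, hσ⟩ := hC.main hK hanti Y
  have hP := (hC.left hK hanti).1
  have key : ∀ u, NC u → g '' ln Y 0 u = vln Y 0 (g u) := by
    intro u hu
    obtain ⟨X, hX⟩ := hl Y 0 u hu.ne_zero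
    rw [zero_add, h0, sub_zero] at hX
    by_cases hXY : X = Y
    · rw [hX, hXY]
    · exfalso
      obtain ⟨hn, ht⟩ := hP u hu
      have h1 := ht Y
      rw [← image_image (pr i j) g, hX, pr_vln] at h1
      simp only [h0, zero_add, sub_zero] at h1
      have e1 : X = !(Y == true) := by cases X <;> cases Y <;> simp_all
      have e2 : pr i j (0 : Fin n → K) = 0 := rfl
      rw [e1, e2, sub_zero] at h1
      exact hn.ln_ne 0 _ h1.symm
  refine ⟨σ, ?_, ?_⟩
  · intro t
    obtain ⟨u, hu⟩ := hK
    have : vs Y t (g u) ∈ g '' ln Y 0 u := by rw [key u hu]; exact ⟨t, by simp⟩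
    obtain ⟨_, ⟨c, rfl⟩, hc⟩ := this
    refine ⟨c, ?_⟩
    have h1 := congrArg (pr i j) hc
    rw [zero_add, pr_vs, hσ] at h1
    exact sm_cancel Y (hP u hu).1.ne_zero h1
  · intro c u
    obtain ⟨v, hv⟩ := hK
    refine hv.gen (T := fun u => g (sm Y c u) = vs Y (σ c) (g u)) ?_ ?_ u
    · intro x y
      have hz : g (sm Y c 0) = vs Y (σ c) (g 0) := by
        rw [sm_vzero, h0]; ext l; cases Y <;> simp [vs]
      by_cases hx : x = 0
      · subst hx; simpa using hz
      by_cases hy : y = 0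
      · subst hy; simpa using hz
      have hu := (hv.right hy).left hx
      generalize sm true x (sm false y v) = u at hu
      have : g (sm Y c u) ∈ g '' ln Y 0 u := mem_image_of_mem _ ⟨c, by simp⟩
      rw [key u hu] at this
      obtain ⟨s, hs⟩ := this
      rw [zero_add] at hs
      have h1 := congrArg (pr i j) hs
      rw [pr_vs, hσ] at h1
      rw [hs, sm_cancel Y (hP u hu).1.ne_zero h1]
    · intro x y hx hy
      rw [sm_vadd, hadd, hadd, vs_vadd, hx, hy]

end
end St19

open Function Set
namespace St19
section
variable {K : Type*} [DivisionRing K] {n : ℕ}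

/-- left or right subspaces -/
structure SubY (Y : Bool) (A : Set (Fin n → K)) : Prop where
  zero : (0 : Fin n → K) ∈ A
  add : ∀ x ∈ A, ∀ y ∈ A, x + y ∈ A
  smul : ∀ c, ∀ x ∈ A, vs Y c x ∈ A

theorem SubY.neg {Y : Bool} {A : Set (Fin n → K)} (h : SubY Y A) {x : Fin n → K} (hx : x ∈ A) :
    -x ∈ A := by
  have := h.smul (-1) x hx
  have e : vs Y (-1) x = -x := by ext i; cases Y <;> simp [vs]
  rwa [e] at this

theorem SubY.sub {Y : Bool} {A : Set (Fin n → K)} (h : SubY Y A) {x y : Fin n → K} (hx : x ∈ A)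
    (hy : y ∈ A) : x - y ∈ A := by
  rw [sub_eq_add_neg]; exact h.add _ hx _ (h.neg hy)

/-- differences of values -/
def Df (f : (Fin n → K) → (Fin n → K)) (a : Fin n → K) (S : Set (Fin n → K)) : Set (Fin n → K) :=
  {z | ∃ x ∈ S, z = f (a + x) - f a}

theorem subY_of_left {A : Set (Fin n → K)} (h : IsLeftAff A) {p : Fin n → K} (hp : p ∈ A) :
    SubY true {z | p + z ∈ A} := by
  obtain ⟨v, S, rfl⟩ := h
  obtain ⟨s, hs, rfl⟩ := hp
  have key : ∀ z, v + s + z ∈ (v + ·) '' (S : Set (Fin n → K)) ↔ z ∈ S := by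
    intro z
    constructor
    · rintro ⟨t, ht, e⟩
      have : z = t - s := by
        have e' : v + t = v + (s + z) := by rw [← add_assoc]; exact e
        rw [add_left_cancel e']; abel
      rw [this]; exact S.sub_mem ht hs
    · intro hz; exact ⟨s + z, S.add_mem hs hz, by simp [add_assoc]⟩
  refine ⟨?_, ?_, ?_⟩
  · exact (key 0).mpr S.zero_mem
  · intro x hx y hy
    exact (key _).mpr (S.add_mem ((key _).mp hx) ((key _).mp hy))
  · intro c x hx
    exact (key _).mpr (S.smul_mem c ((key _).mp hx))

theorem subY_of_right {A : Set (Fin n → K)} (h : IsRightAff A) {p : Fin n → K} (hp : p ∈ A) :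
    SubY false {z | p + z ∈ A} := by
  obtain ⟨v, S, rfl⟩ := h
  obtain ⟨s, hs, rfl⟩ := hp
  have key : ∀ z, v + s + z ∈ (v + ·) '' (S : Set (Fin n → K)) ↔ z ∈ S := by
    intro z
    constructor
    · rintro ⟨t, ht, e⟩
      have : z = t - s := by
        have e' : v + t = v + (s + z) := by rw [← add_assoc]; exact e
        rw [add_left_cancel e']; abel
      rw [this]; exact S.sub_mem ht hs
    · intro hz; exact ⟨s + z, S.add_mem hs hz, by simp [add_assoc]⟩
  refine ⟨?_, ?_, ?_⟩
  · exact (key 0).mpr S.zero_mem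
  · intro x hx y hy
    exact (key _).mpr (S.add_mem ((key _).mp hx) ((key _).mp hy))
  · intro c x hx
    exact (key _).mpr (S.smul_mem (MulOpposite.op c) ((key _).mp hx))

theorem SubY.aff {Y : Bool} {S : Set (Fin n → K)} (h : SubY Y S) (a : Fin n → K) :
    (Y = true → IsLeftAff ((a + ·) '' S)) ∧ (Y = false → IsRightAff ((a + ·) '' S)) := by
  constructor
  · rintro rfl
    exact ⟨a, { carrier := S, add_mem' := fun hx hy => h.add _ hx _ hy, zero_mem' := h.zero,
                smul_mem' := fun c x hx => h.smul c x hx }, rfl⟩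
  · rintro rfl
    exact ⟨a, { carrier := S, add_mem' := fun hx hy => h.add _ hx _ hy, zero_mem' := h.zero,
                smul_mem' := fun c x hx => h.smul c.unop x hx }, rfl⟩

theorem Df_sub {f : (Fin n → K) → (Fin n → K)}
    (hf : ∀ A : Set (Fin n → K), (IsLeftAff A ∨ IsRightAff A) →
      (IsLeftAff (f '' A) ∨ IsRightAff (f '' A))) (a : Fin n → K) {Y : Bool}
    {S : Set (Fin n → K)} (hS : SubY Y S) : ∃ X, SubY X (Df f a S) := by
  have e : Df f a S = {z | f a + z ∈ f '' ((a + ·) '' S)} := by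
    ext z
    simp only [Df, mem_ofPred_eq, mem_image, exists_exists_and_eq_and]
    constructor
    · rintro ⟨x, hx, rfl⟩; exact ⟨x, hx, by abel⟩
    · rintro ⟨x, hx, e⟩; exact ⟨x, hx, by rw [e]; abel⟩
  have hm : f a ∈ f '' ((a + ·) '' S) := ⟨a, ⟨0, hS.zero, by simp⟩, rfl⟩
  rw [e]
  have h1 : IsLeftAff ((a + ·) '' S) ∨ IsRightAff ((a + ·) '' S) := by
    cases Y
    · exact Or.inr ((hS.aff a).2 rfl)
    · exact Or.inl ((hS.aff a).1 rfl)
  rcases hf _ h1 with h | h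
  · exact ⟨true, subY_of_left h hm⟩
  · exact ⟨false, subY_of_right h hm⟩

open Classical in
/-- pivots -/
noncomputable def piv (A : Set (Fin n → K)) : Finset (Fin n) :=
  Finset.univ.filter fun i => ∃ x ∈ A, x i ≠ 0 ∧ ∀ l < i, x l = 0

theorem mem_piv {A : Set (Fin n → K)} {i : Fin n} :
    i ∈ piv A ↔ ∃ x ∈ A, x i ≠ 0 ∧ ∀ l < i, x l = 0 := by simp [piv]

theorem piv_mono {A B : Set (Fin n → K)} (h : A ⊆ B) : piv A ⊆ piv B := by
  intro i hi
  rw [mem_piv] at hi ⊢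
  obtain ⟨x, hx, h'⟩ := hi
  exact ⟨x, h hx, h'⟩

theorem exists_lead {x : Fin n → K} (hx : x ≠ 0) : ∃ i, x i ≠ 0 ∧ ∀ l < i, x l = 0 := by
  classical
  have hne : (Finset.univ.filter fun i => x i ≠ 0).Nonempty := by
    by_contra hc
    apply hx
    ext i
    by_contra hi
    exact hc ⟨i, by simpa using hi⟩
  refine ⟨Finset.min' _ hne, ?_, ?_⟩
  · have := Finset.min'_mem _ hne
    simpa using this
  · intro l hl
    by_contra hc
    exact absurd (Finset.min'_le _ l (by simpa using hc)) (not_le.mpr hl)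

theorem piv_eq {Y Z : Bool} {A B : Set (Fin n → K)} (hA : SubY Y A) (hB : SubY Z B) (hAB : A ⊆ B)
    (hp : piv B ⊆ piv A) : B ⊆ A := by
  suffices H : ∀ r : ℕ, ∀ x ∈ B, (∀ l : Fin n, l.val < n - r → x l = 0) → x ∈ A by
    intro x hx
    exact H n x hx (fun l hl => by omega)
  intro r
  induction r with
  | zero =>
    intro x _ h
    have : x = 0 := by ext l; exact h l (by have := l.2; omega)
    rw [this]; exact hA.zero
  | succ r ih =>
    intro x hx h
    by_cases hr : r < n
    · let i : Fin n := ⟨n - (r + 1), by omega⟩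
      have hstep : ∀ y ∈ B, y i = 0 → (∀ l : Fin n, l.val < n - (r + 1) → y l = 0) → y ∈ A := by
        intro y hy hyi hyl
        refine ih y hy fun l hl => ?_
        by_cases hli : l = i
        · rw [hli]; exact hyi
        · refine hyl l ?_
          have : l.val ≠ n - (r + 1) := fun e => hli (Fin.ext e)
          omega
      by_cases hxi : x i = 0
      · exact hstep x hx hxi h
      · have hi : i ∈ piv B := mem_piv.mpr ⟨x, hx, hxi, fun l hl => h l hl⟩
        obtain ⟨y, hy, hyi, hyl⟩ := mem_piv.mp (hp hi)
        obtain ⟨c, hc⟩ : ∃ c, vs Y c y i = x i := by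
          cases Y
          · exact ⟨(y i)⁻¹ * x i, by simp [vs, hyi]⟩
          · exact ⟨x i * (y i)⁻¹, by simp [vs, hyi]⟩
        have hcy := hA.smul c y hy
        have h1 : x - vs Y c y ∈ A := by
          refine hstep _ (hB.sub hx (hAB hcy)) (by simp [hc]) ?_
          intro l hl
          have e1 := h l hl
          have e2 := hyl l hl
          cases Y <;> simp [vs, e1, e2]
        have := hA.add _ h1 _ hcy
        simpa using this
    · exact ih x hx fun l hl => by omega

/-- coordinate subspaces -/
def Cs (J : Finset (Fin n)) : Set (Fin n → K) := {x | ∀ l, l ∉ J → x l = 0}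

theorem Cs_sub (J : Finset (Fin n)) : SubY true (Cs J : Set (Fin n → K)) where
  zero := fun _ _ => rfl
  add := fun x hx y hy l hl => by simp [hx l hl, hy l hl]
  smul := fun c x hx l hl => by simp [vs, hx l hl]

theorem Df_mono (f : (Fin n → K) → (Fin n → K)) (a : Fin n → K) {S T : Set (Fin n → K)}
    (h : S ⊆ T) : Df f a S ⊆ Df f a T := by
  rintro _ ⟨x, hx, rfl⟩; exact ⟨x, h hx, rfl⟩

theorem Df_inj {f : (Fin n → K) → (Fin n → K)} (hinj : Function.Injective f)
    (a : Fin n → K) {S T : Set (Fin n → K)}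
    (h : Df f a S ⊆ Df f a T) : S ⊆ T := by
  intro x hx
  obtain ⟨y, hy, e⟩ := h ⟨x, hx, rfl⟩
  have := hinj (sub_left_injective e)
  rwa [add_left_cancel this]

theorem piv_lt {f : (Fin n → K) → (Fin n → K)} (hinj : Function.Injective f)
    (hf : ∀ A : Set (Fin n → K), (IsLeftAff A ∨ IsRightAff A) →
      (IsLeftAff (f '' A) ∨ IsRightAff (f '' A))) (a : Fin n → K) {Y Z : Bool}
    {S T : Set (Fin n → K)} (hS : SubY Y S) (hT : SubY Z T) (h : S ⊆ T) (h' : ¬ T ⊆ S) :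
    (piv (Df f a S)).card < (piv (Df f a T)).card := by
  obtain ⟨X, hX⟩ := Df_sub hf a hS
  obtain ⟨W, hW⟩ := Df_sub hf a hT
  apply Finset.card_lt_card
  refine ⟨piv_mono (Df_mono f a h), fun hc => h' ?_⟩
  exact Df_inj hinj a (piv_eq hX hW (Df_mono f a h) hc)

theorem card_bound {f : (Fin n → K) → (Fin n → K)} (hinj : Function.Injective f)
    (hf : ∀ A : Set (Fin n → K), (IsLeftAff A ∨ IsRightAff A) →
      (IsLeftAff (f '' A) ∨ IsRightAff (f '' A))) (a : Fin n → K) (J : Finset (Fin n)) :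
    (piv (Df f a (Cs J))).card ≤ J.card := by
  suffices H : ∀ m : ℕ, ∀ J : Finset (Fin n), n ≤ J.card + m →
      (piv (Df f a (Cs J))).card ≤ J.card from H n J (by omega)
  intro m
  induction m with
  | zero =>
    intro J hJ
    exact (Finset.card_le_univ _).trans (by simpa using hJ)
  | succ m ih =>
    intro J hJ
    by_cases hall : ∀ i, i ∈ J
    · have : J = Finset.univ := by ext i; simp [hall i]
      rw [this]
      exact Finset.card_le_card (Finset.subset_univ _)
    · push Not at hall
      obtain ⟨i, hi⟩ := hall
      have h1 := ih (insert i J) (by rw [Finset.card_insert_of_notMem hi]; omega)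
      rw [Finset.card_insert_of_notMem hi] at h1
      have h2 := piv_lt hinj hf a (Cs_sub J) (Cs_sub (insert i J))
        (fun x hx l hl => hx l (fun h => hl (Finset.mem_insert_of_mem h)))
        (by
          intro hc
          have : (Pi.single i 1 : Fin n → K) ∈ (Cs (insert i J) : Set (Fin n → K)) := by
            intro l hl
            have : l ≠ i := fun e => hl (e ▸ Finset.mem_insert_self _ _)
            simp [this]
          have := hc this i hi
          simp at this)
      omega

theorem vln_sub (X : Bool) (v : Fin n → K) : SubY X (vln X 0 v) where
  zero := ⟨0, by ext i; cases X <;> simp [vs]⟩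
  add := by
    rintro _ ⟨c, rfl⟩ _ ⟨d, rfl⟩
    exact ⟨c + d, by ext i; cases X <;> simp [vs, add_mul, mul_add]⟩
  smul := by
    rintro e _ ⟨c, rfl⟩
    cases X
    · exact ⟨c * e, by ext i; simp [vs, mul_assoc]⟩
    · exact ⟨e * c, by ext i; simp [vs, mul_assoc]⟩

/-- embedding of a coordinate plane -/
def em (i j : Fin n) (u : K × K) : Fin n → K := Pi.single i u.1 + Pi.single j u.2

theorem em_add (i j : Fin n) (u v : K × K) : em i j (u + v) = em i j u + em i j v := by
  simp only [em, Prod.fst_add, Prod.snd_add, Pi.single_add]; abel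

theorem em_sm (i j : Fin n) (X : Bool) (c : K) (v : K × K) :
    em i j (sm X c v) = vs X c (em i j v) := by
  ext l
  by_cases h1 : l = i <;> by_cases h2 : l = j <;> cases X <;>
    simp [em, sm, vs, Pi.single_apply, h1, h2, mul_add, add_mul]

theorem em_inj {i j : Fin n} (hij : i ≠ j) : Function.Injective (em i j : K × K → Fin n → K) := by
  intro u v e
  have h1 := congrFun e i
  have h2 := congrFun e j
  simp [em, Pi.single_apply, hij, hij.symm] at h1 h2
  exact Prod.ext h1 h2

theorem em_mem (i j : Fin n) (u : K × K) : em i j u ∈ (Cs {i, j} : Set (Fin n → K)) := by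
  intro l hl
  simp only [Finset.mem_insert, Finset.mem_singleton, not_or] at hl
  simp [em, hl.1, hl.2]

theorem Cs_pair {i j : Fin n} (hij : i ≠ j) {x : Fin n → K} (hx : x ∈ (Cs {i, j} : Set (Fin n → K))) :
    ∃ u, x = em i j u := by
  refine ⟨(x i, x j), ?_⟩
  ext l
  by_cases h1 : l = i
  · subst h1; simp [em, Pi.single_apply, hij]
  by_cases h2 : l = j
  · subst h2; simp [em, Pi.single_apply, hij.symm]
  simp [em, h1, h2, hx l (by simp [h1, h2])]

theorem sub_pair (hn : 2 ≤ n) (s : Finset (Fin n)) (hs : s.card ≤ 2) : ∃ i j, s ⊆ {i, j} := by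
  have : s.card = 0 ∨ s.card = 1 ∨ s.card = 2 := by omega
  rcases this with h | h | h
  · rw [Finset.card_eq_zero] at h
    subst h
    exact ⟨⟨0, by omega⟩, ⟨0, by omega⟩, by simp⟩
  · obtain ⟨i, rfl⟩ := Finset.card_eq_one.mp h
    exact ⟨i, i, by simp⟩
  · obtain ⟨i, j, _, rfl⟩ := Finset.card_eq_two.mp h
    exact ⟨i, j, subset_rfl⟩

/-- behaviour on coordinate planes -/
theorem plane (hn : 2 ≤ n) (hK : ∃ v : K × K, NC v)
    (hanti : ¬ ∃ α : K → K, Function.Bijective α ∧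
      (∀ a b : K, α (a + b) = α a + α b) ∧ (∀ a b : K, α (a * b) = α b * α a))
    {f : (Fin n → K) → (Fin n → K)} (hinj : Function.Injective f)
    (hf : ∀ A : Set (Fin n → K), (IsLeftAff A ∨ IsRightAff A) →
      (IsLeftAff (f '' A) ∨ IsRightAff (f '' A))) (a : Fin n → K) {i j : Fin n} (hij : i ≠ j)
    (g : K × K → Fin n → K) (hg : ∀ u, g u = f (a + em i j u) - f a) :
    (∀ x y, g (x + y) = g x + g y) ∧
    ∀ Y, ∃ σ : K → K, Function.Surjective σ ∧ ∀ c u, g (sm Y c u) = vs Y (σ c) (g u) := by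
  have hem0 : em i j (0 : K × K) = 0 := by simp [em]
  have hcard : ∀ a, (piv (Df f a (Cs {i, j}))).card ≤ 2 := fun a =>
    (card_bound hinj hf a {i, j}).trans Finset.card_le_two
  obtain ⟨i', j', hpr⟩ := sub_pair hn _ (hcard a)
  obtain ⟨X, hX⟩ := Df_sub hf a (Cs_sub {i, j})
  let B : AddSubgroup (Fin n → K) :=
    { carrier := Df f a (Cs {i, j})
      add_mem' := fun hx hy => hX.add _ hx _ hy
      zero_mem' := hX.zero
      neg_mem' := fun hx => hX.neg hx }
  refine lift g hK hanti ?_ ?_ B ?_ i' j' ?_ ?_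
  · intro x y e
    rw [hg, hg] at e
    exact em_inj hij (add_left_cancel (hinj (sub_left_injective e)))
  · rw [hg, hem0]; simp
  · intro x
    exact ⟨_, em_mem i j x, hg x⟩
  · intro x hx h0
    by_contra hne
    obtain ⟨l, hl, hl'⟩ := exists_lead hne
    have : l ∈ piv (Df f a (Cs {i, j})) := mem_piv.mpr ⟨x, hx, hl, hl'⟩
    have := hpr this
    simp only [Finset.mem_insert, Finset.mem_singleton] at this
    rcases this with e | e
    · rw [e] at hl; exact hl (congrArg Prod.fst h0)
    · rw [e] at hl; exact hl (congrArg Prod.snd h0)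
  · intro Y p v hv
    set b := a + em i j p with hb
    have hS := vln_sub Y (em i j v)
    obtain ⟨Z, hZ⟩ := Df_sub hf b hS
    have hlt := piv_lt hinj hf b hS (Cs_sub {i, j})
      (by
        rintro _ ⟨c, rfl⟩
        rw [zero_add, ← em_sm]; exact em_mem _ _ _)
      (by
        intro hc
        have key : ∀ z : K × K, ∃ c, z = sm Y c v := by
          intro z
          obtain ⟨c, hc⟩ := hc (em_mem i j z)
          refine ⟨c, em_inj hij ?_⟩
          rw [hc, em_sm, zero_add]
        obtain ⟨c, hc⟩ := key (1, 0)
        obtain ⟨d, hd⟩ := key (0, 1)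
        have c1 := congrArg Prod.fst hc
        have c2 := congrArg Prod.snd hc
        have d1 := congrArg Prod.fst hd
        have d2 := congrArg Prod.snd hd
        cases Y
        · simp only [sm, Bool.false_eq_true, if_false] at c1 c2 d1 d2
          have hc0 : c ≠ 0 := by rintro rfl; simp at c1
          have hv2 : v.2 = 0 := (mul_eq_zero.mp c2.symm).resolve_right hc0
          simp [hv2] at d2
        · simp only [sm, if_true] at c1 c2 d1 d2
          have hc0 : c ≠ 0 := by rintro rfl; simp at c1
          have hv2 : v.2 = 0 := (mul_eq_zero.mp c2.symm).resolve_left hc0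
          simp [hv2] at d2)
    have hle : (piv (Df f b (vln Y 0 (em i j v)))).card ≤ 1 := by
      have := hcard b; omega
    have hem : g (p + v) - g p = f (b + em i j v) - f b := by
      rw [hg, hg, em_add, ← add_assoc, ← hb]; abel
    set δ := f (b + em i j v) - f b with hδ
    have hδ0 : δ ≠ 0 := by
      intro h0
      have := hinj (sub_eq_zero.mp h0)
      rw [add_eq_left, ← hem0] at this
      exact hv (em_inj hij this)
    have hδm : δ ∈ Df f b (vln Y 0 (em i j v)) :=
      ⟨_, ⟨1, by ext l; cases Y <;> simp [vs]⟩, rfl⟩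
    have hsub : vln Z 0 δ ⊆ Df f b (vln Y 0 (em i j v)) := by
      rintro _ ⟨c, rfl⟩
      rw [zero_add]; exact hZ.smul c _ hδm
    have hsub' : Df f b (vln Y 0 (em i j v)) ⊆ vln Z 0 δ := by
      refine piv_eq (vln_sub Z δ) hZ hsub ?_
      obtain ⟨l, hl, hl'⟩ := exists_lead hδ0
      have hl1 : l ∈ piv (vln Z 0 δ) :=
        mem_piv.mpr ⟨δ, ⟨1, by ext l; cases Z <;> simp [vs]⟩, hl, hl'⟩
      have hl2 := piv_mono hsub hl1
      intro t ht
      rw [Finset.card_le_one.mp hle t ht l hl2]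
      exact hl1
    refine ⟨Z, ?_⟩
    rw [hem]
    ext z
    constructor
    · rintro ⟨_, ⟨c, rfl⟩, rfl⟩
      obtain ⟨d, hd⟩ := hsub' ⟨_, ⟨c, rfl⟩, rfl⟩
      refine ⟨d, ?_⟩
      simp only [zero_add] at hd
      rw [← hd, hg, hg, em_add, em_sm, ← add_assoc, ← hb]; abel
    · rintro ⟨d, rfl⟩
      obtain ⟨_, ⟨c, rfl⟩, hc⟩ := hsub ⟨d, rfl⟩
      refine ⟨p + sm Y c v, ⟨c, rfl⟩, ?_⟩
      rw [zero_add] at hc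
      rw [hc, hg, hg, em_add, em_sm, ← add_assoc, ← hb, zero_add]; abel

theorem vs_cancel {Y : Bool} {c d : K} {x : Fin n → K} (hx : x ≠ 0) (h : vs Y c x = vs Y d x) :
    c = d := by
  obtain ⟨i, hi, _⟩ := exists_lead hx
  have := congrFun h i
  cases Y
  · exact mul_left_cancel₀ hi (by simpa [vs] using this)
  · exact mul_right_cancel₀ hi (by simpa [vs] using this)

theorem single_ind {T : (Fin n → K) → Prop} (h0 : T 0) (hadd : ∀ x y, T x → T y → T (x + y))
    (hs : ∀ i c, T (Pi.single i c)) (x : Fin n → K) : T x := by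
  rw [← Finset.univ_sum_single x]
  exact Finset.sum_induction _ T hadd h0 (fun i _ => hs i _)

theorem global (hn : 2 ≤ n) (hK : ∃ v : K × K, NC v)
    (hanti : ¬ ∃ α : K → K, Function.Bijective α ∧
      (∀ a b : K, α (a + b) = α a + α b) ∧ (∀ a b : K, α (a * b) = α b * α a))
    {f : (Fin n → K) → (Fin n → K)} (hinj : Function.Injective f)
    (hf : ∀ A : Set (Fin n → K), (IsLeftAff A ∨ IsRightAff A) →
      (IsLeftAff (f '' A) ∨ IsRightAff (f '' A)))
    (h : (Fin n → K) → Fin n → K) (hh : ∀ x, h x = f x - f 0) :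
    (∀ a x, f (a + x) = f a + h x) ∧ (∀ x y, h (x + y) = h x + h y) ∧
    ∀ Y, ∃ σ : K → K, Function.Surjective σ ∧ ∀ c u, h (vs Y c u) = vs Y (σ c) (h u) := by
  have hother : ∀ i : Fin n, ∃ j, i ≠ j := by
    intro i
    by_cases h0 : i.val = 0
    · exact ⟨⟨1, by omega⟩, fun e => by have := congrArg Fin.val e; simp_all⟩
    · exact ⟨⟨0, by omega⟩, fun e => h0 (congrArg Fin.val e)⟩
  have e0 : ∀ (i j : Fin n) (x : K), em i j (x, 0) = Pi.single i x := by
    intro i j x; simp [em]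
  have e1 : ∀ (i j : Fin n) (x : K), em i j (0, x) = Pi.single j x := by
    intro i j x; simp [em]
  have step1 : ∀ (i : Fin n) (x : K) (j : Fin n) (y : K) (a : Fin n → K),
      f (a + Pi.single j y + Pi.single i x) - f (a + Pi.single j y) =
        f (a + Pi.single i x) - f a := by
    intro i x j y a
    by_cases hij : i = j
    · subst hij
      obtain ⟨j, hij⟩ := hother i
      have := (plane hn hK hanti hinj hf a hij _ (fun _ => rfl)).1 (y, 0) (x, 0)
      rw [em_add, e0, e0, ← add_assoc] at this
      have t := congrArg (· + f a - f (a + Pi.single i y)) this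
      simp only [sub_add_cancel] at t
      rw [t]; abel
    · have := (plane hn hK hanti hinj hf a hij _ (fun _ => rfl)).1 (0, y) (x, 0)
      rw [em_add, e0, e1, ← add_assoc] at this
      have t := congrArg (· + f a - f (a + Pi.single j y)) this
      simp only [sub_add_cancel] at t
      rw [t]; abel
  have step2 : ∀ (i : Fin n) (x : K) (t a : Fin n → K),
      f (a + t + Pi.single i x) - f (a + t) = f (a + Pi.single i x) - f a := by
    intro i x t
    refine single_ind (T := fun t => ∀ a,
      f (a + t + Pi.single i x) - f (a + t) = f (a + Pi.single i x) - f a) ?_ ?_ ?_ t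
    · intro a; simp
    · intro x y hx hy a
      rw [← add_assoc, hy, hx]
    · intro j y a; exact step1 i x j y a
  have step3 : ∀ a x, f (a + x) = f a + h x := by
    intro a x
    refine single_ind (T := fun x => ∀ a, f (a + x) = f a + h x) ?_ ?_ ?_ x a
    · intro a; simp [hh]
    · intro x y hx hy a
      have : h (x + y) = h x + h y := by
        rw [hh, hy, hh x]; abel
      rw [← add_assoc, hy, hx, this, add_assoc]
    · intro i y a
      have := step2 i y a 0
      rw [zero_add, zero_add] at this
      rw [hh, ← this]; abel
  have step4 : ∀ x y, h (x + y) = h x + h y := by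
    intro x y
    rw [hh, step3, hh x]; abel
  refine ⟨step3, step4, fun Y => ?_⟩
  have h0 : h 0 = 0 := by simp [hh]
  have hv0 : ∀ (c : K), vs Y c (0 : Fin n → K) = 0 := by
    intro c; ext l; cases Y <;> simp [vs]
  let i0 : Fin n := ⟨0, by omega⟩
  have hne : h (Pi.single i0 1) ≠ 0 := by
    rw [hh]; intro e
    have := congrFun (hinj (sub_eq_zero.mp e)) i0
    simp at this
  have pl : ∀ j, i0 ≠ j → ∃ σ : K → K, Function.Surjective σ ∧
      ∀ c u, h (vs Y c (em i0 j u)) = vs Y (σ c) (h (em i0 j u)) := by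
    intro j hj
    obtain ⟨σ, hσs, hσ⟩ := (plane hn hK hanti hinj hf 0 hj _ (fun _ => rfl)).2 Y
    refine ⟨σ, hσs, fun c u => ?_⟩
    have := hσ c u
    rw [em_sm, zero_add, zero_add, ← hh, ← hh] at this
    exact this
  obtain ⟨j1, hj1⟩ := hother i0
  obtain ⟨σ, hσs, hσ⟩ := pl j1 hj1
  refine ⟨σ, hσs, fun c u => ?_⟩
  refine single_ind (T := fun u => h (vs Y c u) = vs Y (σ c) (h u)) ?_ ?_ ?_ u
  · rw [hv0, h0, hv0]
  · intro x y hx hy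
    rw [vs_vadd, step4, step4, vs_vadd, hx, hy]
  · intro j x
    by_cases hj : i0 = j
    · subst hj
      have := hσ c (x, 0)
      rwa [e0] at this
    · obtain ⟨τ, _, hτ⟩ := pl j hj
      have t1 := hτ c (1, 0)
      have t2 := hσ c (1, 0)
      rw [e0] at t1 t2
      have t3 := vs_cancel hne (t1.symm.trans t2)
      have := hτ c (0, x)
      rwa [e1, t3] at this

end
end St19

/-- If `k` admits no anti-automorphism, then any injective map of `k^n` (`n ≥ 2`)
taking left or right affine subspaces to left or right affine subspaces takes left
affine subspaces to left ones and right affine subspaces to right ones. -/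
theorem stmt_19 [DivisionRing k] {n : ℕ} (hn : 2 ≤ n)
    (hanti : ¬ ∃ α : k → k, Function.Bijective α ∧
      (∀ a b : k, α (a + b) = α a + α b) ∧ (∀ a b : k, α (a * b) = α b * α a))
    (f : (Fin n → k) → (Fin n → k)) (hinj : Function.Injective f)
    (hf : ∀ A : Set (Fin n → k), (IsLeftAff A ∨ IsRightAff A) →
      (IsLeftAff (f '' A) ∨ IsRightAff (f '' A))) :
    (∀ A : Set (Fin n → k), IsLeftAff A → IsLeftAff (f '' A)) ∧
    (∀ A : Set (Fin n → k), IsRightAff A → IsRightAff (f '' A)) := by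
  have hK : ∃ v : k × k, St19.NC v := by
    by_contra hc
    push Not at hc
    refine hanti ⟨id, Function.bijective_id, fun _ _ => rfl, fun a b => ?_⟩
    by_contra hab
    exact hc (1, b) ⟨one_ne_zero, a, by simpa using hab⟩
  obtain ⟨h, hh⟩ : ∃ h : (Fin n → k) → (Fin n → k), ∀ x, h x = f x - f 0 :=
    ⟨fun x => f x - f 0, fun _ => rfl⟩
  obtain ⟨h1, h2, h3⟩ := St19.global hn hK hanti hinj hf h hh
  have key : ∀ (Y : Bool) (v : Fin n → k) (S : Set (Fin n → k)), St19.SubY Y S →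
      St19.SubY Y (h '' S) ∧ f '' ((v + ·) '' S) = (f v + ·) '' (h '' S) := by
    intro Y v S hS
    obtain ⟨σ, hσs, hσ⟩ := h3 Y
    constructor
    · refine ⟨⟨0, hS.zero, ?_⟩, ?_, ?_⟩
      · have := h2 0 0
        simpa using this
      · rintro _ ⟨x, hx, rfl⟩ _ ⟨y, hy, rfl⟩
        exact ⟨x + y, hS.add _ hx _ hy, h2 x y⟩
      · rintro c _ ⟨x, hx, rfl⟩
        obtain ⟨d, rfl⟩ := hσs c
        exact ⟨_, hS.smul d x hx, hσ d x⟩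
    · rw [Set.image_image, Set.image_image]
      simp only [h1]
  constructor
  · rintro _ ⟨v, S, rfl⟩
    obtain ⟨k1, k2⟩ := key true v S ⟨S.zero_mem, fun x hx y hy => S.add_mem hx hy,
      fun c x hx => S.smul_mem c hx⟩
    rw [k2]
    exact (k1.aff _).1 rfl
  · rintro _ ⟨v, S, rfl⟩
    obtain ⟨k1, k2⟩ := key false v S ⟨S.zero_mem, fun x hx y hy => S.add_mem hx hy,
      fun c x hx => S.smul_mem (MulOpposite.op c) hx⟩
    rw [k2]
    exact (k1.aff _).2 rfl
end
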